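/- arXiv:2412.07569 — 2 statements merged into one kernel-verified Lean document; each statement's English description precedes it below -/
import Mathlib

section
/- Let F be a field of characteristic 0. Consider the polynomial ring C = F[z_{j,i}] indexed by pairs (j,i) with i ∈ {0,1,...,n₁}, j ∈ {m₀+1,...,m, m+1}, excluding the pair (m+1, 0). Define the algebra homomorphism φ : C → F[x₁,...,x_{n₁}, y_{m₀+1},...,y_m] by φ(z_{j,i}) = x_i x_j − y_i y_j when i ≥ 1 and j ≤ m (interpreting x_j, y_i as new variables as appropriate), φ(z_{m+1,i}) = x_i for i ≥ 1, and φ(z_{j,0}) = y_j for j ≤ m. Then ker φ equals the ideal generated by all 3×3 minors of the matrix (z_{j,i}). -/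
open MvPolynomial

namespace Stmt1

variable (F : Type*) [Field F] [CharZero F] (n₁ k : ℕ)

/-- The target polynomial ring: variables `x_i, x_j` (left) and `y_i, y_j` (right),
for `i ∈ J₁` (of size `n₁`) and `j ∈ J₃` (of size `k`). -/
abbrev Target := MvPolynomial ((Fin n₁ ⊕ Fin k) ⊕ (Fin n₁ ⊕ Fin k)) F

/-- The source polynomial ring `C = F[z_{j,i}]`, with `j : Fin (k+1)` (the last index
playing the role of `m+1`), `i : Fin (n₁+1)` (the index `0` playing the role of `0`),
excluding the pair `(m+1, 0)`. -/
abbrev Source :=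
  MvPolynomial {p : Fin (k + 1) × Fin (n₁ + 1) // p ≠ (Fin.last k, 0)} F

/-- The matrix of "variables" `z_{j,i}`, with `z_{m+1,0} = 0`. -/
noncomputable def Z (j : Fin (k + 1)) (i : Fin (n₁ + 1)) : Source F n₁ k :=
  if h : (j, i) ≠ (Fin.last k, 0) then X ⟨(j, i), h⟩ else 0

/-- The image of the variable `z_{j,i}` under `φ`. -/
noncomputable def img (j : Fin (k + 1)) (i : Fin (n₁ + 1)) : Target F n₁ k :=
  if hj : (j : ℕ) < k then
    if hi : (i : ℕ) = 0 then
      -- z_{j,0} ↦ y_j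
      X (Sum.inr (Sum.inr ⟨j, hj⟩))
    else
      -- z_{j,i} ↦ x_i x_j − y_i y_j
      X (Sum.inl (Sum.inl ⟨(i : ℕ) - 1, by have := i.isLt; omega⟩)) *
          X (Sum.inl (Sum.inr ⟨j, hj⟩)) -
        X (Sum.inr (Sum.inl ⟨(i : ℕ) - 1, by have := i.isLt; omega⟩)) *
          X (Sum.inr (Sum.inr ⟨j, hj⟩))
  else
    if hi : (i : ℕ) = 0 then 0
    else
      -- z_{m+1,i} ↦ x_i
      X (Sum.inl (Sum.inl ⟨(i : ℕ) - 1, by have := i.isLt; omega⟩))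

/-- The algebra homomorphism `φ : C → F[x, y]`. -/
noncomputable def φ : Source F n₁ k →ₐ[F] Target F n₁ k :=
  aeval (fun v => img F n₁ k v.1.1 v.1.2)

/-!
The matrix of the images `φ (z_{j,i})` has the form `a bᵀ - a' b'ᵀ`, so its three-rowed minors
vanish. Conversely, modulo the three-rowed minors, Plücker-type relations straighten every product
of entries and two-rowed minors into a combination of standard products, whose factors form a chain
and avoid the zero entry. Specializing `φ (z_{j,i})` further, to a product of a size-counting
variable and a difference `P_j Q_i - P'_j Q'_i`, turns standard products into polynomials whose
leading coefficients are pairwise distinct monomials: these record the row and column indices of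
the factors, and a chain is determined by the multisets of its coordinates. Hence the standard
products stay linearly independent, and `φ` is injective modulo the three-rowed minors.
-/

theorem exists_isLeast_of_isChain {α : Type*} [PartialOrder α] {s : Multiset α} (hs : s ≠ 0)
    (hc : IsChain (· ≤ ·) {x | x ∈ s}) : ∃ x, IsLeast {x | x ∈ s} x := by
  classical
  have hfin : {x | x ∈ s}.Finite := s.finite_toSet
  obtain ⟨x, hx⟩ := hfin.exists_minimal (Multiset.exists_mem_of_ne_zero hs)
  refine ⟨x, hx.prop, fun y hy => ?_⟩
  exact (hc.total hx.prop hy).elim id fun hyx => hx.le_of_le hy hyx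

theorem multiset_eq_of_isChain {ι α : Type*} [Nonempty ι] [PartialOrder α]
    {s t : Multiset (ι → α)} (hs : IsChain (· ≤ ·) {x | x ∈ s})
    (ht : IsChain (· ≤ ·) {x | x ∈ t})
    (h : ∀ i, s.map (fun x => x i) = t.map (fun x => x i)) : s = t := by
  classical
  have hcard : s.card = t.card := by
    simpa using congrArg Multiset.card (h (Classical.arbitrary ι))
  induction hn : s.card generalizing s t with
  | zero => rw [Multiset.card_eq_zero.1 hn, Multiset.card_eq_zero.1 (hcard.symm.trans hn)]
  | succ n ih =>
    obtain ⟨x, hx⟩ := exists_isLeast_of_isChain (Multiset.card_pos.1 (by omega)) hs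
    obtain ⟨y, hy⟩ := exists_isLeast_of_isChain (Multiset.card_pos.1 (by omega)) ht
    have least_le {s t : Multiset (ι → α)} {x y : ι → α} (hx : x ∈ s)
        (hy : IsLeast {z | z ∈ t} y) (h : ∀ i, s.map (fun x => x i) = t.map (fun x => x i)) :
        y ≤ x := fun i => by
      have hxi : x i ∈ t.map (fun z => z i) := h i ▸ Multiset.mem_map_of_mem _ hx
      obtain ⟨z, hz, hzi⟩ := Multiset.mem_map.1 hxi
      exact hzi ▸ hy.2 hz i
    obtain rfl : x = y := (least_le hy.1 hx fun i => (h i).symm).antisymm (least_le hx.1 hy h)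
    have herase : s.erase x = t.erase x := by
      refine ih (hs.mono fun z hz => Multiset.mem_of_mem_erase hz)
        (ht.mono fun z hz => Multiset.mem_of_mem_erase hz) (fun i => ?_) ?_ ?_
      · rw [Multiset.map_erase_of_mem _ _ hx.1, Multiset.map_erase_of_mem _ _ hy.1, h i]
      · rw [Multiset.card_erase_of_mem hx.1, Multiset.card_erase_of_mem hy.1, hcard]
      · rw [Multiset.card_erase_of_mem hx.1, hn, Nat.pred_succ]
    rw [← Multiset.cons_erase hx.1, ← Multiset.cons_erase hy.1, herase]

theorem exists_weight_add_lt {P α : Type*} [Finite P] [Preorder α] (ρ : P → α) :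
    ∃ w : P → ℕ, ∀ x y z, ρ z < ρ x → ρ z < ρ y → w x + w y < w z := by
  classical
  let below (x : P) : ℕ := Nat.card {z // ρ z < ρ x}
  have below_le (x : P) : below x ≤ Nat.card P := Finite.card_subtype_le _
  have below_lt {z x : P} (h : ρ z < ρ x) : below z < below x :=
    Set.ncard_lt_ncard (s := {u | ρ u < ρ z}) (t := {u | ρ u < ρ x})
      ⟨fun u hu => lt_trans hu h, fun hsub => lt_irrefl _ (hsub h)⟩
  refine ⟨fun x => 3 ^ (Nat.card P - below x), fun x y z hzx hzy => ?_⟩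
  have triple {x : P} (h : ρ z < ρ x) :
      3 ^ (Nat.card P - below x) * 3 ≤ 3 ^ (Nat.card P - below z) := by
    rw [← pow_succ]
    have := below_lt h
    have := below_le x
    exact Nat.pow_le_pow_right (by norm_num) (by omega)
  have := triple hzx
  have := triple hzy
  have : 0 < 3 ^ (Nat.card P - below x) := by positivity
  change 3 ^ _ + 3 ^ _ < 3 ^ _
  omega

section Straightening

variable {A P : Type*} [CommSemiring A]

/-- The `R`-span of the products of values of `v` over the multisets in `S`: the "standard
monomials" when `S` singles out the standard multisets. -/
def productSpan (R : Type*) [CommSemiring R] [Algebra R A] (v : P → A) (S : Set (Multiset P)) :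
    Submodule R A :=
  Submodule.span R ((fun M : Multiset P => (M.map v).prod) '' S)

variable {R : Type*} [CommSemiring R] [Algebra R A] {v : P → A}

theorem prod_mem_productSpan {S : Set (Multiset P)} {M : Multiset P} (hM : M ∈ S) :
    (M.map v).prod ∈ productSpan R v S :=
  Submodule.subset_span ⟨M, hM, rfl⟩

theorem mul_prod_mem_productSpan {S T : Set (Multiset P)} {a : A} (ha : a ∈ productSpan R v S)
    {N : Multiset P} (hST : ∀ M ∈ S, ((M + N).map v).prod ∈ productSpan R v T) :
    a * (N.map v).prod ∈ productSpan R v T := by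
  have hmap := Submodule.mem_map_of_mem (f := LinearMap.mulRight R (N.map v).prod) ha
  rw [productSpan, Submodule.map_span] at hmap
  refine Submodule.span_le.2 ?_ hmap
  rintro _ ⟨_, ⟨M, hM, rfl⟩, rfl⟩
  simpa only [SetLike.mem_coe, LinearMap.mulRight_apply, Multiset.map_add,
    Multiset.prod_add] using hST M hM

theorem prod_mem_productSpan_isChain [Finite P] [Preorder P] {α : Type*} [Preorder α]
    {d : P → ℕ} (hd : ∀ x, 0 < d x) (ρ : P → α)
    (h : ∀ x y, ¬ x ≤ y → ¬ y ≤ x → v x * v y ∈ productSpan R v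
      {M | (M.map d).sum = d x + d y ∧ ∃ z ∈ M, ρ z < ρ x ∧ ρ z < ρ y})
    (N : Multiset P) :
    (N.map v).prod ∈ productSpan R v {M | IsChain (· ≤ ·) {x | x ∈ M}} := by
  obtain ⟨w, hw⟩ := exists_weight_add_lt ρ
  obtain ⟨b, hb⟩ := (Set.finite_range w).bddAbove
  have weight_le (N : Multiset P) : (N.map w).sum ≤ (N.map d).sum * b := by
    rw [← Multiset.sum_map_mul_right]
    exact Multiset.sum_map_le_sum_map _ _ fun x _ =>
      (hb ⟨x, rfl⟩).trans (Nat.le_mul_of_pos_left _ (hd x))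
  induction hm : (N.map d).sum * b - (N.map w).sum
    using Nat.strong_induction_on generalizing N with
  | _ m ih =>
  by_cases hN : IsChain (· ≤ ·) {x | x ∈ N}
  · exact prod_mem_productSpan hN
  obtain ⟨x, hx, y, hy, hxy, hle⟩ : ∃ x ∈ N, ∃ y ∈ N, x ≠ y ∧ ¬ (x ≤ y ∨ y ≤ x) := by
    simpa [IsChain, Set.Pairwise] using hN
  obtain ⟨N, rfl⟩ := Multiset.exists_cons_of_mem hx
  obtain ⟨N, rfl⟩ := Multiset.exists_cons_of_mem ((Multiset.mem_cons.1 hy).resolve_left hxy.symm)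
  rw [Multiset.map_cons, Multiset.map_cons, Multiset.prod_cons, Multiset.prod_cons, ← mul_assoc]
  refine mul_prod_mem_productSpan (h x y (not_or.1 hle).1 (not_or.1 hle).2) ?_
  rintro M ⟨hMd, z, hz, hzx, hzy⟩
  have hMw := (hw x y z hzx hzy).trans_le
    (Multiset.single_le_sum (fun _ _ => Nat.zero_le _) _ (Multiset.mem_map_of_mem w hz))
  have hMN := weight_le (M + N)
  refine ih _ ?_ _ rfl
  simp only [Multiset.map_cons, Multiset.sum_cons, Multiset.map_add, Multiset.sum_add, hMd,
    ← add_assoc] at hm hMN ⊢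
  omega

end Straightening

section TwoMinor

variable {ι κ A : Type*} [CommRing A]

/-- The two-rowed minor of `W` on the rows `a, b` and the columns `c, d`, with the sign that
makes the antidiagonal term positive. -/
def twoMinor (W : Matrix ι κ A) (a b : ι) (c d : κ) : A :=
  W a d * W b c - W a c * W b d

theorem twoMinor_transpose (W : Matrix ι κ A) (a b : ι) (c d : κ) :
    twoMinor W.transpose c d a b = twoMinor W a b c d := by
  simp only [twoMinor, Matrix.transpose_apply]
  ring

/-- All three-rowed minors of `W`, possibly with repeated rows or columns, vanish. -/
def ThreeMinorsVanish (W : Matrix ι κ A) : Prop :=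
  ∀ (r : Fin 3 → ι) (c : Fin 3 → κ), (W.submatrix r c).det = 0

variable {W : Matrix ι κ A}

theorem ThreeMinorsVanish.transpose (hW : ThreeMinorsVanish W) :
    ThreeMinorsVanish W.transpose := fun r c => by
  rw [← Matrix.transpose_submatrix, Matrix.det_transpose, hW]

theorem ThreeMinorsVanish.entry_mul_twoMinor_row (hW : ThreeMinorsVanish W)
    (j a b : ι) (i c d : κ) :
    W j i * twoMinor W a b c d =
      twoMinor W j b c d * W a i - twoMinor W j a c d * W b i := by
  have h := hW ![j, a, b] ![i, c, d]
  simp only [Matrix.det_fin_three, Matrix.submatrix_apply, Matrix.cons_val_zero,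
    Matrix.cons_val_one, Matrix.cons_val] at h
  simp only [twoMinor]
  linear_combination -h

theorem ThreeMinorsVanish.entry_mul_twoMinor_col (hW : ThreeMinorsVanish W)
    (j a b : ι) (i c d : κ) :
    W j i * twoMinor W a b c d =
      twoMinor W a b i d * W j c - twoMinor W a b i c * W j d := by
  simpa only [twoMinor_transpose, Matrix.transpose_apply] using
    hW.transpose.entry_mul_twoMinor_row i c d j a b

theorem ThreeMinorsVanish.twoMinor_mul_twoMinor_row (hW : ThreeMinorsVanish W)
    (a b e f : ι) (c d g h : κ) :
    twoMinor W a b c d * twoMinor W e f g h =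
      twoMinor W a e c d * twoMinor W b f g h - twoMinor W b e c d * twoMinor W a f g h := by
  have hg := hW.entry_mul_twoMinor_row e a b g c d
  have hh := hW.entry_mul_twoMinor_row e a b h c d
  simp only [twoMinor] at hg hh ⊢
  linear_combination W f g * hh - W f h * hg

theorem ThreeMinorsVanish.twoMinor_mul_twoMinor_col (hW : ThreeMinorsVanish W)
    (a b e f : ι) (c d g h : κ) :
    twoMinor W a b c d * twoMinor W e f g h =
      twoMinor W a b c g * twoMinor W e f d h - twoMinor W a b d g * twoMinor W e f c h := by
  simpa only [twoMinor_transpose] using hW.transpose.twoMinor_mul_twoMinor_row c d g h a b e f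

theorem ThreeMinorsVanish.twoMinor_mul_swap (hW : ThreeMinorsVanish W)
    (a b e f : ι) (c d g h : κ) :
    twoMinor W a b c d * twoMinor W e f g h = twoMinor W a b g h * twoMinor W e f c d := by
  have hcd := hW.twoMinor_mul_twoMinor_row a b f e c d g h
  have hgh := hW.twoMinor_mul_twoMinor_row a b e f g h c d
  simp only [twoMinor] at hcd hgh ⊢
  linear_combination -hcd - hgh

end TwoMinor

/-- The entries and the two-rowed minors of a `p × q` matrix. -/
inductive Minor (p q : ℕ)
  | entry (j : Fin p) (i : Fin q)
  | pair (a b : Fin p) (c d : Fin q) (hab : a < b) (hcd : c < d)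

namespace Minor

variable {p q : ℕ}

/-- The two row and the two column indices of a minor; an entry gets the out-of-range second row
`p` and second column `q`. -/
def coord : Minor p q → Fin 4 → ℕ
  | entry j i => ![j, p, i, q]
  | pair a b c d _ _ => ![a, b, c, d]

theorem coord_injective : Function.Injective (coord (p := p) (q := q)) := by
  rintro (⟨j, i⟩ | ⟨a, b, c, d, hab, hcd⟩) (⟨j', i'⟩ | ⟨a', b', c', d', hab', hcd'⟩) h <;>
    simp only [coord, Matrix.vecCons_inj, Fin.val_inj, true_and, and_true, entry.injEq,
      pair.injEq] at h ⊢ <;> omega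

/-- Minors are ordered by comparing their row and column indices one by one. -/
instance : PartialOrder (Minor p q) :=
  PartialOrder.lift coord coord_injective

theorem coord_le (m : Minor p q) (c : Fin 4) : m.coord c ≤ ![p, p, q, q] c := by
  cases m <;> fin_cases c <;> simp [coord]

instance : Finite (Minor p q) :=
  Finite.of_injective
    (fun m c => (⟨m.coord c, Nat.lt_succ_of_le (m.coord_le c)⟩ : Fin (![p, p, q, q] c + 1)))
    fun _ _ h => coord_injective (funext fun c => congrArg Fin.val (congrFun h c))

theorem le_iff {m m' : Minor p q} : m ≤ m' ↔
    (m.coord 0 ≤ m'.coord 0 ∧ m.coord 1 ≤ m'.coord 1) ∧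
      m.coord 2 ≤ m'.coord 2 ∧ m.coord 3 ≤ m'.coord 3 := by
  change (∀ c, m.coord c ≤ m'.coord c) ↔ _
  simp [Fin.forall_fin_succ, and_assoc]

theorem entry_le_entry {j j' : Fin p} {i i' : Fin q} :
    entry j i ≤ entry j' i' ↔ j ≤ j' ∧ i ≤ i' := by
  simp [le_iff, coord]

theorem pair_le_entry {a b j : Fin p} {c d i : Fin q} {hab : a < b} {hcd : c < d} :
    pair a b c d hab hcd ≤ entry j i ↔ a ≤ j ∧ c ≤ i := by
  simp [le_iff, coord]

theorem pair_le_pair {a b a' b' : Fin p} {c d c' d' : Fin q} {hab : a < b} {hcd : c < d}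
    {hab' : a' < b'} {hcd' : c' < d'} :
    pair a b c d hab hcd ≤ pair a' b' c' d' hab' hcd' ↔
      (a ≤ a' ∧ b ≤ b') ∧ c ≤ c' ∧ d ≤ d' := by
  simp [le_iff, coord]

/-- The degree of a minor in the entries of the matrix. -/
def size : Minor p q → ℕ
  | entry .. => 1
  | pair .. => 2

theorem size_pos (m : Minor p q) : 0 < m.size := by
  cases m <;> simp [size]

/-- The rank that straightening lowers: the row indices weigh more than the column indices. -/
def rank (m : Minor p q) : ℕ ×ₗ ℕ :=
  toLex (m.coord 0 + m.coord 1, m.coord 2 + m.coord 3)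

theorem rank_lt_of_row {m m' : Minor p q}
    (h : m.coord 0 + m.coord 1 < m'.coord 0 + m'.coord 1) : m.rank < m'.rank :=
  Prod.Lex.toLex_lt_toLex.2 (Or.inl h)

theorem rank_lt_of_col {m m' : Minor p q}
    (hrow : m.coord 0 + m.coord 1 ≤ m'.coord 0 + m'.coord 1)
    (hcol : m.coord 2 + m.coord 3 < m'.coord 2 + m'.coord 3) : m.rank < m'.rank :=
  Prod.Lex.toLex_lt_toLex'.2 ⟨hrow, fun _ => hcol⟩

/-- The value of a minor at the matrix `W`. -/
def eval {A : Type*} [CommRing A] (W : Matrix (Fin p) (Fin q) A) : Minor p q → A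
  | entry j i => W j i
  | pair a b c d _ _ => twoMinor W a b c d

section Straightening

variable {R A : Type*} [CommRing R] [CommRing A] [Algebra R A] {W : Matrix (Fin p) (Fin q) A}

/-- The combinations of products of minors that a product of two minors `x` and `y` may be
rewritten into. -/
def straighteningSpan (R : Type*) [CommRing R] [Algebra R A] (W : Matrix (Fin p) (Fin q) A)
    (x y : Minor p q) : Submodule R A :=
  productSpan R (eval W) {M | (M.map size).sum = x.size + y.size ∧
    ∃ z ∈ M, z.rank < x.rank ∧ z.rank < y.rank}

variable {x y z z' : Minor p q}

theorem straighteningSpan_comm : straighteningSpan R W x y = straighteningSpan R W y x := by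
  simp only [straighteningSpan, add_comm y.size, and_comm]

theorem prod_mem_straighteningSpan {M : Multiset (Minor p q)} (hz : z ∈ M)
    (hd : (M.map size).sum = x.size + y.size) (hx : z.rank < x.rank) (hy : z.rank < y.rank) :
    (M.map (eval W)).prod ∈ straighteningSpan R W x y :=
  prod_mem_productSpan ⟨hd, z, hz, hx, hy⟩

theorem eval_mem_straighteningSpan (hd : z.size = x.size + y.size)
    (hx : z.rank < x.rank) (hy : z.rank < y.rank) :
    eval W z ∈ straighteningSpan R W x y := by
  simpa using prod_mem_straighteningSpan (M := {z}) (Multiset.mem_singleton_self z)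
    (by simpa using hd) hx hy

theorem eval_mul_eval_mem_straighteningSpan (z z' : Minor p q)
    (hd : z.size + z'.size = x.size + y.size) (hx : z.rank < x.rank) (hy : z.rank < y.rank) :
    eval W z * eval W z' ∈ straighteningSpan R W x y := by
  simpa using prod_mem_straighteningSpan (M := {z, z'}) (Multiset.mem_cons_self z {z'})
    (by simpa using hd) hx hy

theorem entry_mul_entry_mem_straighteningSpan {j j' : Fin p} {i i' : Fin q} (hj : j < j')
    (hi : i' < i) : W j i * W j' i' ∈ straighteningSpan R W (entry j i) (entry j' i') := by
  have hrel : W j i * W j' i' = W j i' * W j' i + twoMinor W j j' i' i := by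
    simp only [twoMinor]
    ring
  rw [hrel]
  refine add_mem (eval_mul_eval_mem_straighteningSpan (entry j i') (entry j' i) rfl ?_ ?_)
    (eval_mem_straighteningSpan (z := pair j j' i' i hj hi) rfl ?_ ?_)
  · exact rank_lt_of_col le_rfl (by simpa [coord] using hi)
  · exact rank_lt_of_row (by simpa [coord] using hj)
  · exact rank_lt_of_row (by simp [coord])
  · exact rank_lt_of_row (by simp only [coord, Matrix.cons_val]; omega)

theorem entry_mul_pair_mem_straighteningSpan (hW : ThreeMinorsVanish W) {j a b : Fin p}
    {i c d : Fin q} (hab : a < b) (hcd : c < d) (h : j < a ∨ i < c) :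
    W j i * twoMinor W a b c d ∈
      straighteningSpan R W (entry j i) (pair a b c d hab hcd) := by
  by_cases hj : j < a
  · rw [hW.entry_mul_twoMinor_row]
    refine sub_mem (eval_mul_eval_mem_straighteningSpan
        (pair j b c d (hj.trans hab) hcd) (entry a i) rfl ?_ ?_)
      (eval_mul_eval_mem_straighteningSpan (pair j a c d hj hcd) (entry b i) rfl ?_ ?_) <;>
    exact rank_lt_of_row (by simp only [coord, Matrix.cons_val]; omega)
  · have hi : i < c := h.resolve_left hj
    rw [hW.entry_mul_twoMinor_col]
    refine sub_mem (eval_mul_eval_mem_straighteningSpan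
        (pair a b i d hab (hi.trans hcd)) (entry j c) rfl ?_ ?_)
      (eval_mul_eval_mem_straighteningSpan (pair a b i c hab hi) (entry j d) rfl ?_ ?_)
    · exact rank_lt_of_row (by simp only [coord, Matrix.cons_val]; omega)
    · exact rank_lt_of_col le_rfl (by simpa [coord] using hi)
    · exact rank_lt_of_row (by simp only [coord, Matrix.cons_val]; omega)
    · exact rank_lt_of_col le_rfl (by simp only [coord, Matrix.cons_val]; omega)

theorem pair_mul_pair_mem_straighteningSpan_of_row_nested (hW : ThreeMinorsVanish W)
    {a b e f : Fin p} {c d g h : Fin q} (hab : a < b) (hcd : c < d) (hef : e < f) (hgh : g < h)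
    (hae : a < e) (hfb : f < b) :
    twoMinor W a b c d * twoMinor W e f g h ∈
      straighteningSpan R W (pair a b c d hab hcd) (pair e f g h hef hgh) := by
  have hrel : twoMinor W a b c d * twoMinor W e f g h =
      twoMinor W a f g h * twoMinor W e b c d - twoMinor W a e c d * twoMinor W f b g h := by
    have hplucker := hW.twoMinor_mul_twoMinor_row a b e f c d g h
    simp only [twoMinor] at hplucker ⊢
    linear_combination hplucker
  rw [hrel]
  refine sub_mem (eval_mul_eval_mem_straighteningSpan
      (pair a f g h (by omega) hgh) (pair e b c d (by omega) hcd) rfl ?_ ?_)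
    (eval_mul_eval_mem_straighteningSpan
      (pair a e c d hae hcd) (pair f b g h hfb hgh) rfl ?_ ?_) <;>
  exact rank_lt_of_row (by simp only [coord, Matrix.cons_val]; omega)

theorem pair_mul_pair_mem_straighteningSpan_of_row_le (hW : ThreeMinorsVanish W)
    {a b e f : Fin p} {c d g h : Fin q} (hab : a < b) (hcd : c < d) (hef : e < f) (hgh : g < h)
    (hae : a ≤ e) (hbf : b ≤ f)
    (hle : ¬ pair a b c d hab hcd ≤ pair e f g h hef hgh)
    (hge : ¬ pair e f g h hef hgh ≤ pair a b c d hab hcd) :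
    twoMinor W a b c d * twoMinor W e f g h ∈
      straighteningSpan R W (pair a b c d hab hcd) (pair e f g h hef hgh) := by
  rw [pair_le_pair] at hle hge
  obtain ⟨hgc, hhd⟩ | ⟨hcg, hhd⟩ | ⟨hgc, hdh⟩ :
      (g ≤ c ∧ h ≤ d) ∨ (c < g ∧ h < d) ∨ (g < c ∧ d < h) := by omega
  · rw [hW.twoMinor_mul_swap]
    refine eval_mul_eval_mem_straighteningSpan (pair a b g h hab hgh) (pair e f c d hef hcd) rfl
      (rank_lt_of_col le_rfl ?_) (rank_lt_of_row ?_) <;> simp only [coord, Matrix.cons_val] <;>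
    omega
  · have hrel : twoMinor W a b c d * twoMinor W e f g h =
        twoMinor W a b c h * twoMinor W e f g d - twoMinor W a b c g * twoMinor W e f h d := by
      have hplucker := hW.twoMinor_mul_twoMinor_col a b e f c d h g
      have hswap := hW.twoMinor_mul_swap a b e f c g h d
      simp only [twoMinor] at hplucker hswap ⊢
      linear_combination hswap - hplucker
    rw [hrel]
    refine sub_mem (eval_mul_eval_mem_straighteningSpan
        (pair a b c h hab (by omega)) (pair e f g d hef (by omega)) rfl ?_ ?_)
      (eval_mul_eval_mem_straighteningSpan
        (pair a b c g hab hcg) (pair e f h d hef hhd) rfl ?_ ?_) <;>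
    refine rank_lt_of_col ?_ ?_ <;> simp only [coord, Matrix.cons_val] <;> omega
  · have hrel : twoMinor W a b c d * twoMinor W e f g h =
        twoMinor W a b g d * twoMinor W e f c h - twoMinor W a b g c * twoMinor W e f d h := by
      have hplucker := hW.twoMinor_mul_twoMinor_col a b e f c d g h
      simp only [twoMinor] at hplucker ⊢
      linear_combination hplucker
    rw [hrel]
    refine sub_mem (eval_mul_eval_mem_straighteningSpan
        (pair a b g d hab (by omega)) (pair e f c h hef (by omega)) rfl ?_ ?_)
      (eval_mul_eval_mem_straighteningSpan
        (pair a b g c hab hgc) (pair e f d h hef hdh) rfl ?_ ?_) <;>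
    refine rank_lt_of_col ?_ ?_ <;> simp only [coord, Matrix.cons_val] <;> omega

theorem pair_mul_pair_mem_straighteningSpan (hW : ThreeMinorsVanish W) {a b e f : Fin p}
    {c d g h : Fin q} (hab : a < b) (hcd : c < d) (hef : e < f) (hgh : g < h)
    (hle : ¬ pair a b c d hab hcd ≤ pair e f g h hef hgh)
    (hge : ¬ pair e f g h hef hgh ≤ pair a b c d hab hcd) :
    twoMinor W a b c d * twoMinor W e f g h ∈
      straighteningSpan R W (pair a b c d hab hcd) (pair e f g h hef hgh) := by
  obtain ⟨hae, hfb⟩ | ⟨hea, hbf⟩ | ⟨hae, hbf⟩ | ⟨hea, hfb⟩ :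
      (a < e ∧ f < b) ∨ (e < a ∧ b < f) ∨ (a ≤ e ∧ b ≤ f) ∨ (e ≤ a ∧ f ≤ b) := by omega
  · exact pair_mul_pair_mem_straighteningSpan_of_row_nested hW hab hcd hef hgh hae hfb
  · rw [mul_comm, straighteningSpan_comm]
    exact pair_mul_pair_mem_straighteningSpan_of_row_nested hW hef hgh hab hcd hea hbf
  · exact pair_mul_pair_mem_straighteningSpan_of_row_le hW hab hcd hef hgh hae hbf hle hge
  · rw [mul_comm, straighteningSpan_comm]
    exact pair_mul_pair_mem_straighteningSpan_of_row_le hW hef hgh hab hcd hea hfb hge hle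

theorem eval_mul_mem_straighteningSpan (hW : ThreeMinorsVanish W) (hxy : ¬ x ≤ y)
    (hyx : ¬ y ≤ x) : eval W x * eval W y ∈ straighteningSpan R W x y := by
  match x, y with
  | entry j i, entry j' i' =>
    rw [entry_le_entry] at hxy hyx
    obtain ⟨hj, hi⟩ | ⟨hj, hi⟩ : (j < j' ∧ i' < i) ∨ (j' < j ∧ i < i') := by omega
    · exact entry_mul_entry_mem_straighteningSpan hj hi
    · rw [mul_comm, straighteningSpan_comm]
      exact entry_mul_entry_mem_straighteningSpan hj hi
  | entry j i, pair a b c d hab hcd =>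
    rw [pair_le_entry] at hyx
    exact entry_mul_pair_mem_straighteningSpan hW hab hcd (by omega)
  | pair a b c d hab hcd, entry j i =>
    rw [pair_le_entry] at hxy
    rw [mul_comm, straighteningSpan_comm]
    exact entry_mul_pair_mem_straighteningSpan hW hab hcd (by omega)
  | pair a b c d hab hcd, pair e f g h hef hgh =>
    exact pair_mul_pair_mem_straighteningSpan hW hab hcd hef hgh hxy hyx

theorem prod_eval_mem_productSpan_isChain (hW : ThreeMinorsVanish W)
    (N : Multiset (Minor p q)) :
    (N.map (eval W)).prod ∈ productSpan R (eval W) {M | IsChain (· ≤ ·) {x | x ∈ M}} :=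
  prod_mem_productSpan_isChain size_pos rank
    (fun _ _ hxy hyx => eval_mul_mem_straighteningSpan hW hxy hyx) N

end Straightening

section Standard

variable {k n : ℕ}

/-- A standard multiset of minors is a chain that avoids the last entry of the matrix. -/
structure IsStandard (N : Multiset (Minor (k + 1) (n + 1))) : Prop where
  isChain : IsChain (· ≤ ·) {x | x ∈ N}
  corner_notMem : entry (Fin.last k) (Fin.last n) ∉ N

section Spanning

variable {R A : Type*} [CommRing R] [CommRing A] [Algebra R A]
  {W : Matrix (Fin (k + 1)) (Fin (n + 1)) A}

theorem prod_eval_mem_productSpan_isStandard (hW : ThreeMinorsVanish W)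
    (hcorner : W (Fin.last k) (Fin.last n) = 0) (N : Multiset (Minor (k + 1) (n + 1))) :
    (N.map (eval W)).prod ∈ productSpan R (eval W) {M | IsStandard M} := by
  refine Submodule.span_le.2 ?_ (prod_eval_mem_productSpan_isChain hW N)
  rintro _ ⟨M, hM, rfl⟩
  by_cases hmem : entry (Fin.last k) (Fin.last n) ∈ M
  · have hzero : (M.map (eval W)).prod = 0 :=
      Multiset.prod_eq_zero (Multiset.mem_map.2 ⟨_, hmem, hcorner⟩)
    simp only [hzero, SetLike.mem_coe, zero_mem]
  · exact prod_mem_productSpan ⟨hM, hmem⟩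

theorem productSpan_isStandard_eq_top (hW : ThreeMinorsVanish W)
    (hcorner : W (Fin.last k) (Fin.last n) = 0)
    (hgen : Algebra.adjoin R (Set.range (Function.uncurry W)) = ⊤) :
    productSpan R (eval W) {M | IsStandard M} = ⊤ := by
  rw [eq_top_iff, ← Algebra.top_toSubmodule, ← hgen, Algebra.adjoin_eq_span, Submodule.span_le]
  intro a ha
  obtain ⟨N, rfl⟩ : ∃ N : Multiset (Minor (k + 1) (n + 1)), (N.map (eval W)).prod = a := by
    induction ha using Submonoid.closure_induction with
    | mem a ha =>
      obtain ⟨⟨j, i⟩, rfl⟩ := ha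
      exact ⟨{entry j i}, by simp [eval, Function.uncurry]⟩
    | one => exact ⟨0, by simp⟩
    | mul a b _ _ iha ihb =>
      obtain ⟨M, rfl⟩ := iha
      obtain ⟨N, rfl⟩ := ihb
      exact ⟨M + N, by simp⟩
  exact prod_eval_mem_productSpan_isStandard hW hcorner N

end Spanning

section LeadExp

/-- The last row index `k` or the last column index `n`, according to the coordinate `c`. -/
def bound (k n : ℕ) : Fin 4 → ℕ :=
  ![k, k, n, n]

/-- The exponent vector that records the value `v` of the coordinate `c`, except for the values
belonging to the last row or column and beyond. -/
noncomputable def mark (k n : ℕ) (c : Fin 4) (v : ℕ) : Option (Fin 4 × ℕ) →₀ ℕ :=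
  if v < bound k n c then Finsupp.single (some (c, v)) 1 else 0

/-- The exponent vector of a minor: it records the size in the coordinate `none` and all row and
column indices other than the last ones. -/
noncomputable def leadExp (m : Minor (k + 1) (n + 1)) : Option (Fin 4 × ℕ) →₀ ℕ :=
  Finsupp.single none m.size + ∑ c, mark k n c (m.coord c)

theorem mark_none (c : Fin 4) (v : ℕ) : mark k n c v none = 0 := by
  unfold mark
  split_ifs <;> simp

theorem mark_some (c c' : Fin 4) {v v' : ℕ} (hv : v < bound k n c) :
    mark k n c' v' (some (c, v)) = if c' = c ∧ v' = v then 1 else 0 := by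
  unfold mark
  split_ifs <;> simp_all

theorem leadExp_none (m : Minor (k + 1) (n + 1)) : leadExp m none = m.size := by
  simp [leadExp, mark_none]

theorem leadExp_some (m : Minor (k + 1) (n + 1)) {c : Fin 4} {v : ℕ} (hv : v < bound k n c) :
    leadExp m (some (c, v)) = if m.coord c = v then 1 else 0 := by
  simp [leadExp, mark_some c _ hv, ite_and]

variable (N : Multiset (Minor (k + 1) (n + 1)))

/-- The number of minors in `N` whose coordinate `c` equals `v`. -/
def coordCount (c : Fin 4) (v : ℕ) : ℕ :=
  (N.map fun m => m.coord c).count v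

theorem sum_leadExp_none : (N.map leadExp).sum none = (N.map size).sum := by
  induction N using Multiset.induction_on with
  | empty => simp
  | cons m N ih => simp [ih, leadExp_none]

theorem sum_leadExp_some {c : Fin 4} {v : ℕ} (hv : v < bound k n c) :
    (N.map leadExp).sum (some (c, v)) = coordCount N c v := by
  unfold coordCount
  induction N using Multiset.induction_on with
  | empty => simp
  | cons m N ih => simp [ih, leadExp_some m hv, Multiset.count_cons, add_comm, eq_comm]

theorem coord_le_bound_succ (m : Minor (k + 1) (n + 1)) (c : Fin 4) :
    m.coord c ≤ bound k n c + 1 := by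
  have h := m.coord_le c
  fin_cases c <;> exact h

theorem card_eq_sum_coordCount (c : Fin 4) : N.card =
    ∑ v ∈ Finset.range (bound k n c), coordCount N c v + coordCount N c (bound k n c) +
      coordCount N c (bound k n c + 1) := by
  rw [← Finset.sum_range_succ, ← Finset.sum_range_succ, ← Multiset.card_map (fun m => m.coord c)]
  refine (Multiset.sum_count_eq_card fun v hv => ?_).symm
  obtain ⟨m, -, rfl⟩ := Multiset.mem_map.1 hv
  exact Finset.mem_range.2 (Nat.lt_succ_of_le (coord_le_bound_succ m c))

theorem coordCount_bound_succ_eq_zero {c : Fin 4} (hc : c = 0 ∨ c = 2) :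
    coordCount N c (bound k n c + 1) = 0 := by
  refine Multiset.count_eq_zero.2 fun hmem => ?_
  obtain ⟨m, -, hm⟩ := Multiset.mem_map.1 hmem
  rcases hc with rfl | rfl <;> cases m <;> simp only [coord, bound, Matrix.cons_val] at hm <;> omega

theorem size_add_ite {c : Fin 4} (hc : c = 1 ∨ c = 3) (m : Minor (k + 1) (n + 1)) :
    m.size + (if m.coord c = bound k n c + 1 then 1 else 0) = 2 := by
  rcases hc with rfl | rfl <;> cases m <;> simp [coord, bound, size, (Fin.is_lt _).ne]

theorem sum_size_add_coordCount {c : Fin 4} (hc : c = 1 ∨ c = 3) :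
    (N.map size).sum + coordCount N c (bound k n c + 1) = 2 * N.card := by
  unfold coordCount
  induction N using Multiset.induction_on with
  | empty => simp
  | cons m N ih =>
    have := size_add_ite hc m
    simp only [Multiset.map_cons, Multiset.sum_cons, Multiset.count_cons, Multiset.card_cons,
      eq_comm (b := m.coord c)]
    omega

variable {N} {N' : Multiset (Minor (k + 1) (n + 1))}

theorem exists_entry_last_of_coordCount_zero_ne_zero (h : coordCount N 0 k ≠ 0) :
    ∃ i, entry (Fin.last k) i ∈ N := by
  obtain ⟨m, hmem, hm⟩ := Multiset.mem_map.1 (Multiset.count_ne_zero.1 h)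
  cases m with
  | entry j i =>
    obtain rfl : j = Fin.last k := Fin.ext hm
    exact ⟨i, hmem⟩
  | pair a b c d hab hcd =>
    have hlast : (a : ℕ) = k := hm
    omega

theorem exists_entry_last_of_coordCount_two_ne_zero (h : coordCount N 2 n ≠ 0) :
    ∃ j, entry j (Fin.last n) ∈ N := by
  obtain ⟨m, hmem, hm⟩ := Multiset.mem_map.1 (Multiset.count_ne_zero.1 h)
  cases m with
  | entry j i =>
    obtain rfl : i = Fin.last n := Fin.ext hm
    exact ⟨j, hmem⟩
  | pair a b c d hab hcd =>
    have hlast : (c : ℕ) = n := hm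
    omega

theorem IsStandard.coordCount_eq_zero (hN : IsStandard N) :
    coordCount N 0 k = 0 ∨ coordCount N 2 n = 0 := by
  by_contra! h
  obtain ⟨i, hi⟩ := exists_entry_last_of_coordCount_zero_ne_zero h.1
  obtain ⟨j, hj⟩ := exists_entry_last_of_coordCount_two_ne_zero h.2
  obtain hle | hle := hN.isChain.total hi hj <;> rw [entry_le_entry] at hle
  · exact hN.corner_notMem (Fin.last_le_iff.1 hle.1 ▸ hj)
  · exact hN.corner_notMem (Fin.last_le_iff.1 hle.2 ▸ hi)

theorem IsStandard.card_eq_max (hN : IsStandard N) : N.card =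
    max (∑ v ∈ Finset.range k, coordCount N 0 v) (∑ v ∈ Finset.range n, coordCount N 2 v) := by
  have hrow := card_eq_sum_coordCount N 0
  have hcol := card_eq_sum_coordCount N 2
  rw [coordCount_bound_succ_eq_zero N (by decide)] at hrow hcol
  simp only [bound, Matrix.cons_val] at hrow hcol
  have := hN.coordCount_eq_zero
  omega

theorem IsStandard.coordCount_eq_of_sum_leadExp_eq (hN : IsStandard N) (hN' : IsStandard N')
    (h : (N.map leadExp).sum = (N'.map leadExp).sum) (c : Fin 4) (v : ℕ) :
    coordCount N c v = coordCount N' c v := by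
  have hsize : (N.map size).sum = (N'.map size).sum := by
    rw [← sum_leadExp_none, h, sum_leadExp_none]
  have hlow (c : Fin 4) (v : ℕ) (hv : v < bound k n c) :
      coordCount N c v = coordCount N' c v := by
    rw [← sum_leadExp_some N hv, h, sum_leadExp_some N' hv]
  have hsum (c : Fin 4) : ∑ v ∈ Finset.range (bound k n c), coordCount N c v =
      ∑ v ∈ Finset.range (bound k n c), coordCount N' c v :=
    Finset.sum_congr rfl fun v hv => hlow c v (Finset.mem_range.1 hv)
  have hcard : N.card = N'.card := by
    rw [hN.card_eq_max, hN'.card_eq_max]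
    exact congrArg₂ max (hsum 0) (hsum 2)
  have hsucc : coordCount N c (bound k n c + 1) = coordCount N' c (bound k n c + 1) := by
    obtain hc | hc : (c = 0 ∨ c = 2) ∨ (c = 1 ∨ c = 3) := by fin_cases c <;> simp
    · rw [coordCount_bound_succ_eq_zero N hc, coordCount_bound_succ_eq_zero N' hc]
    · have := sum_size_add_coordCount N hc
      have := sum_size_add_coordCount N' hc
      omega
  have hbound : coordCount N c (bound k n c) = coordCount N' c (bound k n c) := by
    have := card_eq_sum_coordCount N c
    have := card_eq_sum_coordCount N' c
    have := hsum c
    omega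
  obtain hv | rfl | rfl | hv : v < bound k n c ∨ v = bound k n c ∨ v = bound k n c + 1 ∨
      bound k n c + 1 < v := by omega
  · exact hlow c v hv
  · exact hbound
  · exact hsucc
  · have hzero (N : Multiset (Minor (k + 1) (n + 1))) : coordCount N c v = 0 := by
      refine Multiset.count_eq_zero.2 fun hmem => ?_
      obtain ⟨m, -, rfl⟩ := Multiset.mem_map.1 hmem
      exact (coord_le_bound_succ m c).not_gt hv
    rw [hzero, hzero]

theorem IsStandard.eq_of_sum_leadExp_eq (hN : IsStandard N) (hN' : IsStandard N')
    (h : (N.map leadExp).sum = (N'.map leadExp).sum) : N = N' := by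
  have coord_isChain {N : Multiset (Minor (k + 1) (n + 1))} (hN : IsStandard N) :
      IsChain (· ≤ ·) {x | x ∈ N.map coord} := by
    have himage : {x | x ∈ N.map coord} = coord '' {m | m ∈ N} := by
      ext x
      simp
    rw [himage]
    exact hN.isChain.image_of_map_rel _ _ coord (fun _ _ hle => hle)
  refine Multiset.map_injective coord_injective
    (multiset_eq_of_isChain (coord_isChain hN) (coord_isChain hN') fun c => ?_)
  rw [Multiset.map_map, Multiset.map_map]
  exact Multiset.ext.2 (hN.coordCount_eq_of_sum_leadExp_eq hN' h c)

end LeadExp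

end Standard

end Minor

theorem linearIndependent_of_leadingCoeff {ι R S : Type*} [CommRing R] [CommRing S] [Algebra R S]
    {g : ι → Polynomial S} (h : LinearIndependent R fun i => (g i).leadingCoeff) :
    LinearIndependent R g := by
  classical
  rw [linearIndependent_iff'] at h ⊢
  intro s c hsum i hi
  by_contra hci
  obtain ⟨m, hm, hmax⟩ := (s.filter (c · ≠ 0)).exists_max_image (fun i => (g i).natDegree)
    ⟨i, Finset.mem_filter.2 ⟨hi, hci⟩⟩
  rw [Finset.mem_filter] at hm
  have hcoeff : ∑ i ∈ s with (g i).natDegree = (g m).natDegree, c i • (g i).leadingCoeff = 0 := by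
    rw [← Polynomial.coeff_zero (g m).natDegree, ← hsum, Polynomial.finsetSum_coeff,
      Finset.sum_filter]
    refine Finset.sum_congr rfl fun i hi => ?_
    rw [Polynomial.coeff_smul]
    split_ifs with hdeg
    · rw [Polynomial.leadingCoeff, hdeg]
    by_cases hci : c i = 0
    · rw [hci, zero_smul]
    · rw [Polynomial.coeff_eq_zero_of_natDegree_lt
        ((hmax i (Finset.mem_filter.2 ⟨hi, hci⟩)).lt_of_ne hdeg), smul_zero]
  exact hm.2 (h _ c hcoeff m (Finset.mem_filter.2 ⟨hm.1, rfl⟩))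

theorem leadingCoeff_C_mul_X_pow_sub {S : Type*} [CommRing S] {a : S} (ha : a ≠ 0) (b : S)
    {r s : ℕ} (h : s < r) : (Polynomial.C a * Polynomial.X ^ r -
      Polynomial.C b * Polynomial.X ^ s).leadingCoeff = a := by
  rw [Polynomial.leadingCoeff_sub_of_degree_lt, Polynomial.leadingCoeff_C_mul_X_pow]
  rw [Polynomial.degree_C_mul_X_pow _ ha]
  exact (Polynomial.degree_C_mul_X_pow_le _ _).trans_lt (by exact_mod_cast h)

section RankTwo

variable {ι κ A : Type*} [CommRing A]

/-- The matrix `a bᵀ - a' b'ᵀ`, of rank at most two. -/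
def rankTwo (a a' : ι → A) (b b' : κ → A) : Matrix ι κ A :=
  Matrix.of fun j i => a j * b i - a' j * b' i

variable (a a' : ι → A) (b b' : κ → A)

theorem threeMinorsVanish_rankTwo : ThreeMinorsVanish (rankTwo a a' b b') := fun r c => by
  simp only [rankTwo, Matrix.det_fin_three, Matrix.submatrix_apply, Matrix.of_apply]
  ring

theorem twoMinor_rankTwo (r s : ι) (c d : κ) : twoMinor (rankTwo a a' b b') r s c d =
    (a r * a' s - a' r * a s) * (b c * b' d - b' c * b d) := by
  simp only [rankTwo, twoMinor, Matrix.of_apply]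
  ring

end RankTwo

section Specialization

variable (K : Type*) [CommRing K] (k n : ℕ)

/-- Polynomials in a main variable, whose coefficients involve one variable that counts sizes and
one marking variable for every value of every coordinate of a minor. -/
abbrev MarkedRing (K : Type*) [CommRing K] :=
  Polynomial (MvPolynomial (Option (Fin 4 × ℕ)) K)

/-- The factor standing for row or column `v` in the coordinate `c`: a marking variable, or `1` on
the last row and column, times a power of the main variable, which in the coordinates `0` and `2`
decreases with `v`. -/
noncomputable def factor (c : Fin 4) (v : ℕ) : MarkedRing K :=
  Polynomial.C (monomial (Minor.mark k n c v) 1) * Polynomial.X ^ (![k - v, 0, n - v, 0] c)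

/-- The variable that counts sizes of minors. -/
noncomputable def sizeVar : MarkedRing K :=
  Polynomial.C (monomial (Finsupp.single none 1) 1)

/-- The specialization `t (P Qᵀ - P' Q'ᵀ)` of the matrix of a generic element of rank two, in
which the last entries of the four vectors are `1`. -/
noncomputable def markedMatrix :
    Matrix (Fin (k + 1)) (Fin (n + 1)) (MarkedRing K) :=
  rankTwo (fun j => sizeVar K * factor K k n 0 j) (fun j => sizeVar K * factor K k n 1 j)
    (fun i => factor K k n 2 i) (fun i => factor K k n 3 i)

variable {K k n}

theorem factor_bound (c : Fin 4) : factor K k n c (Minor.bound k n c) = 1 := by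
  fin_cases c <;> simp [factor, Minor.mark, Minor.bound]

theorem leadingCoeff_factor_sub [Nontrivial K] {c c' d d' : Fin 4} {v v' w w' : ℕ}
    (h : ![k - w, 0, n - w, 0] d + ![k - w', 0, n - w', 0] d' <
      ![k - v, 0, n - v, 0] c + ![k - v', 0, n - v', 0] c') :
    (factor K k n c v * factor K k n c' v' - factor K k n d w * factor K k n d' w').leadingCoeff =
      monomial (Minor.mark k n c v + Minor.mark k n c' v') 1 := by
  have factor_mul (c c' : Fin 4) (v v' : ℕ) : factor K k n c v * factor K k n c' v' =
      Polynomial.C (monomial (Minor.mark k n c v + Minor.mark k n c' v') 1) *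
        Polynomial.X ^ (![k - v, 0, n - v, 0] c + ![k - v', 0, n - v', 0] c') := by
    rw [factor, factor, mul_mul_mul_comm, ← Polynomial.C_mul, monomial_mul, mul_one, pow_add]
  rw [factor_mul, factor_mul]
  exact leadingCoeff_C_mul_X_pow_sub (by simp) _ h

variable [IsDomain K]

theorem leadingCoeff_eval_markedMatrix {m : Minor (k + 1) (n + 1)}
    (hm : m ≠ Minor.entry (Fin.last k) (Fin.last n)) :
    (m.eval (markedMatrix K k n)).leadingCoeff = monomial m.leadExp 1 := by
  cases m with
  | entry j i =>
    have hlt : (j : ℕ) < k ∨ (i : ℕ) < n := by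
      by_contra! h
      exact hm (by rw [Fin.last_le_iff.1 h.1, Fin.last_le_iff.1 h.2])
    have heval : Minor.eval (markedMatrix K k n) (Minor.entry j i) = sizeVar K *
        (factor K k n 0 j * factor K k n 2 i - factor K k n 1 j * factor K k n 3 i) := by
      simp only [Minor.eval, markedMatrix, rankTwo, Matrix.of_apply]
      ring
    rw [heval, Polynomial.leadingCoeff_mul,
      leadingCoeff_factor_sub (by simp only [Matrix.cons_val]; omega), sizeVar,
      Polynomial.leadingCoeff_C, monomial_mul, mul_one]
    have hrow : Minor.mark k n 1 (k + 1) = 0 := if_neg (by simp [Minor.bound])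
    have hcol : Minor.mark k n 3 (n + 1) = 0 := if_neg (by simp [Minor.bound])
    simp [Minor.leadExp, Fin.sum_univ_four, Minor.coord, Minor.size, hrow, hcol]
  | pair a b c d hab hcd =>
    have heval : Minor.eval (markedMatrix K k n) (Minor.pair a b c d hab hcd) =
        sizeVar K * sizeVar K *
          (factor K k n 0 a * factor K k n 1 b - factor K k n 1 a * factor K k n 0 b) *
          (factor K k n 2 c * factor K k n 3 d - factor K k n 3 c * factor K k n 2 d) := by
      simp only [Minor.eval, markedMatrix, twoMinor_rankTwo]
      ring
    rw [heval, Polynomial.leadingCoeff_mul, Polynomial.leadingCoeff_mul,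
      leadingCoeff_factor_sub (by simp only [Matrix.cons_val]; omega),
      leadingCoeff_factor_sub (by simp only [Matrix.cons_val]; omega), sizeVar,
      ← Polynomial.C_mul, Polynomial.leadingCoeff_C, monomial_mul, monomial_mul, monomial_mul]
    simp [Minor.leadExp, Fin.sum_univ_four, Minor.coord, Minor.size, add_assoc,
      ← Finsupp.single_add]

theorem leadingCoeff_prod_eval_markedMatrix {N : Multiset (Minor (k + 1) (n + 1))}
    (hN : Minor.IsStandard N) :
    ((N.map (Minor.eval (markedMatrix K k n))).prod).leadingCoeff =
      monomial (N.map Minor.leadExp).sum 1 := by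
  rw [Polynomial.leadingCoeff_multiset_prod, Multiset.map_map]
  have hlead : ∀ m ∈ N, (Polynomial.leadingCoeff ∘ Minor.eval (markedMatrix K k n)) m =
      monomial m.leadExp 1 := fun m hm =>
    leadingCoeff_eval_markedMatrix fun h => hN.corner_notMem (h ▸ hm)
  rw [Multiset.map_congr rfl hlead]
  clear hN hlead
  induction N using Multiset.induction_on with
  | empty => simp
  | cons m N ih => simp [ih, monomial_mul]

theorem linearIndependent_prod_eval_markedMatrix :
    LinearIndependent K fun N : {N : Multiset (Minor (k + 1) (n + 1)) // Minor.IsStandard N} =>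
      (N.1.map (Minor.eval (markedMatrix K k n))).prod := by
  apply linearIndependent_of_leadingCoeff
  simp only [fun N : {N : Multiset (Minor (k + 1) (n + 1)) // Minor.IsStandard N} =>
    leadingCoeff_prod_eval_markedMatrix (K := K) N.2]
  have hinj : Function.Injective
      fun N : {N : Multiset (Minor (k + 1) (n + 1)) // Minor.IsStandard N} =>
        (N.1.map Minor.leadExp).sum :=
    fun N N' h => Subtype.ext (N.2.eq_of_sum_leadExp_eq N'.2 h)
  simpa [Function.comp_def] using
    (basisMonomials (Option (Fin 4 × ℕ)) K).linearIndependent.comp _ hinj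

theorem injective_of_map_eq_markedMatrix {A : Type*} [CommRing A] [Algebra K A]
    {W : Matrix (Fin (k + 1)) (Fin (n + 1)) A} (hW : ThreeMinorsVanish W)
    (hcorner : W (Fin.last k) (Fin.last n) = 0)
    (hgen : Algebra.adjoin K (Set.range (Function.uncurry W)) = ⊤)
    (f : A →ₐ[K] MarkedRing K)
    (hf : W.map f = markedMatrix K k n) : Function.Injective f := by
  have map_eval (m : Minor (k + 1) (n + 1)) : f (m.eval W) = m.eval (markedMatrix K k n) := by
    rw [← hf]
    cases m <;> simp [Minor.eval, twoMinor]
  refine LinearMap.injective_of_linearIndependent (f := f.toLinearMap)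
    (v := fun N : {N : Multiset (Minor (k + 1) (n + 1)) // Minor.IsStandard N} =>
      (N.1.map (Minor.eval W)).prod) ?_ ?_
  · rw [← Minor.productSpan_isStandard_eq_top hW hcorner hgen, productSpan, Set.image_eq_range]
    rfl
  · simpa [Function.comp_def, map_multiset_prod, map_eval] using
      linearIndependent_prod_eval_markedMatrix (K := K) (k := k) (n := n)

end Specialization

section Kernel

variable {K : Type*} [Field K] {n₁ k : ℕ}

theorem φ_Z (j : Fin (k + 1)) (i : Fin (n₁ + 1)) : φ K n₁ k (Z K n₁ k j i) = img K n₁ k j i := by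
  by_cases h : (j, i) ≠ (Fin.last k, 0)
  · simp [φ, Z, h]
  · obtain ⟨rfl, rfl⟩ := Prod.mk.inj (not_not.1 h)
    simp [Z, img]

theorem img_eq_rankTwo : Matrix.of (img K n₁ k) = rankTwo
    (Fin.lastCases 1 fun j => X (Sum.inl (Sum.inr j)))
    (Fin.lastCases 0 fun j => X (Sum.inr (Sum.inr j)))
    (Fin.cases 0 fun i => X (Sum.inl (Sum.inl i)))
    (Fin.cases (-1) fun i => X (Sum.inr (Sum.inl i))) := by
  ext j i : 2
  induction j using Fin.lastCases <;> induction i using Fin.cases <;>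
    simp [rankTwo, img, mul_comm]

theorem φ_det_eq_zero (r : Fin 3 → Fin (k + 1)) (c : Fin 3 → Fin (n₁ + 1)) :
    φ K n₁ k (Matrix.of fun a b => Z K n₁ k (r a) (c b)).det = 0 := by
  rw [AlgHom.map_det]
  have hmap : (φ K n₁ k).mapMatrix (Matrix.of fun a b => Z K n₁ k (r a) (c b)) =
      (Matrix.of (img K n₁ k)).submatrix r c := by
    ext a b : 2
    simp [φ_Z]
  rw [hmap, img_eq_rankTwo, threeMinorsVanish_rankTwo]

/-- The specialization of the target ring under which the matrix of the images `φ (z_{j,i})`, with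
its columns in reverse order, becomes `markedMatrix`. -/
noncomputable def specialize (K : Type*) [Field K] (n₁ k : ℕ) :
    Target K n₁ k →ₐ[K] MarkedRing K :=
  aeval (Sum.elim
    (Sum.elim
      (fun i => sizeVar K * (factor K k n₁ 2 i.rev - factor K k n₁ 3 i.rev))
      (fun j => factor K k n₁ 0 j))
    (Sum.elim
      (fun i => -factor K k n₁ 3 i.rev)
      (fun j => sizeVar K * (factor K k n₁ 0 j - factor K k n₁ 1 j))))

theorem specialize_img (j : Fin (k + 1)) (i : Fin (n₁ + 1)) :
    specialize K n₁ k (img K n₁ k j i.rev) = markedMatrix K k n₁ j i := by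
  have h0 : factor K k n₁ 0 k = 1 := factor_bound 0
  have h1 : factor K k n₁ 1 k = 1 := factor_bound 1
  have h2 : factor K k n₁ 2 n₁ = 1 := factor_bound 2
  have h3 : factor K k n₁ 3 n₁ = 1 := factor_bound 3
  induction j using Fin.lastCases <;> induction i using Fin.lastCases <;>
    simp [-Fin.val_rev, specialize, markedMatrix, rankTwo, img, Fin.rev_castSucc, h0, h1, h2,
      h3] <;> ring

/-- The ideal generated by the three-rowed minors of the matrix `(z_{j,i})`. -/
noncomputable def minorIdeal (K : Type*) [Field K] (n₁ k : ℕ) : Ideal (Source K n₁ k) :=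
  Ideal.span { p : Source K n₁ k |
    ∃ (jv : Fin 3 → Fin (k + 1)) (iv : Fin 3 → Fin (n₁ + 1)),
      p = Matrix.det (Matrix.of fun a b => Z K n₁ k (jv a) (iv b)) }

theorem minorIdeal_le_ker : minorIdeal K n₁ k ≤ RingHom.ker (φ K n₁ k) := by
  refine Ideal.span_le.2 ?_
  rintro _ ⟨r, c, rfl⟩
  exact φ_det_eq_zero r c

/-- The matrix of the classes of the `z_{j,i}` modulo the three-rowed minors, with its columns in
reverse order, so that the vanishing entry comes last. -/
noncomputable def quotientMatrix (K : Type*) [Field K] (n₁ k : ℕ) :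
    Matrix (Fin (k + 1)) (Fin (n₁ + 1)) (Source K n₁ k ⧸ minorIdeal K n₁ k) :=
  Matrix.of fun j i => Ideal.Quotient.mkₐ K (minorIdeal K n₁ k) (Z K n₁ k j i.rev)

theorem threeMinorsVanish_quotientMatrix : ThreeMinorsVanish (quotientMatrix K n₁ k) :=
  fun r c => by
    have hmap : (quotientMatrix K n₁ k).submatrix r c =
        (Ideal.Quotient.mkₐ K (minorIdeal K n₁ k)).mapMatrix
          (Matrix.of fun a b => Z K n₁ k (r a) (c b).rev) := rfl
    rw [hmap, ← AlgHom.map_det]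
    exact Ideal.Quotient.eq_zero_iff_mem.2
      (Ideal.subset_span ⟨r, fun b => (c b).rev, rfl⟩)

theorem quotientMatrix_last : quotientMatrix K n₁ k (Fin.last k) (Fin.last n₁) = 0 := by
  simp [quotientMatrix, Z]

theorem adjoin_range_quotientMatrix :
    Algebra.adjoin K (Set.range (Function.uncurry (quotientMatrix K n₁ k))) = ⊤ := by
  rw [eq_top_iff, ← (AlgHom.range_eq_top _).2 (Ideal.Quotient.mkₐ_surjective K (minorIdeal K n₁ k)),
    ← Algebra.map_top, ← adjoin_range_X, AlgHom.map_adjoin]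
  refine Algebra.adjoin_mono ?_
  rintro _ ⟨_, ⟨⟨⟨j, i⟩, hji⟩, rfl⟩, rfl⟩
  have hX : Z K n₁ k j i.rev.rev = X ⟨(j, i), hji⟩ := by
    rw [Fin.rev_rev]
    exact dif_pos hji
  exact ⟨(j, i.rev), congrArg (Ideal.Quotient.mkₐ K (minorIdeal K n₁ k)) hX⟩

theorem ker_le_minorIdeal : RingHom.ker (φ K n₁ k) ≤ minorIdeal K n₁ k := by
  let f : (Source K n₁ k ⧸ minorIdeal K n₁ k) →ₐ[K] MarkedRing K :=
    Ideal.Quotient.liftₐ (minorIdeal K n₁ k) ((specialize K n₁ k).comp (φ K n₁ k))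
      fun p hp => (congrArg (specialize K n₁ k) (minorIdeal_le_ker hp)).trans (map_zero _)
  have hf : (quotientMatrix K n₁ k).map f = markedMatrix K k n₁ :=
    Matrix.ext fun j i =>
      (congrArg (specialize K n₁ k) (φ_Z j i.rev)).trans (specialize_img j i)
  have hinj := injective_of_map_eq_markedMatrix threeMinorsVanish_quotientMatrix
    quotientMatrix_last adjoin_range_quotientMatrix f hf
  intro p hp
  refine Ideal.Quotient.eq_zero_iff_mem.1 (hinj ?_)
  rw [map_zero]
  exact (congrArg (specialize K n₁ k) hp).trans (map_zero _)

end Kernel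

theorem kernel_phi_eq_three_minors_general (K : Type*) [Field K] (n₁ k : ℕ) :
    RingHom.ker (φ K n₁ k).toRingHom =
      Ideal.span { p : Source K n₁ k |
        ∃ (jv : Fin 3 → Fin (k + 1)) (iv : Fin 3 → Fin (n₁ + 1)),
          p = Matrix.det (Matrix.of fun a b => Z K n₁ k (jv a) (iv b)) } :=
  le_antisymm ker_le_minorIdeal minorIdeal_le_ker

/-- `ker φ` equals the ideal generated by all `3×3` minors of `(z_{j,i})`. -/
theorem kernel_phi_eq_three_minors :
    RingHom.ker (φ F n₁ k).toRingHom =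
      Ideal.span { p : Source F n₁ k |
        ∃ (jv : Fin 3 → Fin (k + 1)) (iv : Fin 3 → Fin (n₁ + 1)),
          p = Matrix.det (Matrix.of fun a b => Z F n₁ k (jv a) (iv b)) } :=
  kernel_phi_eq_three_minors_general F n₁ k

end Stmt1
end

section
/- Let F be a field of characteristic 0, n₁ < n ≤ n, and consider monomials z_{j,i} with i ∈ {1,...,n₁} ∪ {0}, j ∈ {n₁+1,...,n} ∪ {n+1}. Suppose a polynomial f = Σ_s a_s f_s where each f_s is a degree-k monomial with a fixed multiset I₁ of lower indices and fixed multiset I₃ of upper indices, and the images under the map z_{j,i} ↦ x_i x_j − y_i y_j (with z_{n+1,i} ↦ x_i, z_{j,0} ↦ y_j) sum to zero. Then f lies in the ideal generated by the 3×3 minors of the matrix (z_{j,i}). -/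
open MvPolynomial

namespace Stmt14

variable (F : Type*) [Field F] [CharZero F] (n₁ n : ℕ)

/-- Target algebra `F[x_i, y_j]`: `x i = X (Sum.inl i)`, `y j = X (Sum.inr j)`. -/
noncomputable def xv (i : ℕ) : MvPolynomial (ℕ ⊕ ℕ) F := X (Sum.inl i)
noncomputable def yv (j : ℕ) : MvPolynomial (ℕ ⊕ ℕ) F := X (Sum.inr j)

/-- The "variable" `z_{j,i}` in `C = F[z_{j,i}]`, with the convention
`z_{n+1,0} = 0`. -/
noncomputable def Z (j i : ℕ) : MvPolynomial (ℕ × ℕ) F :=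
  if j = n + 1 ∧ i = 0 then 0 else X (j, i)

/-- The map `φ`: `z_{j,i} ↦ x_i x_j − y_i y_j` for `1 ≤ i`, `j ≤ n`;
`z_{n+1,i} ↦ x_i`; `z_{j,0} ↦ y_j`. -/
noncomputable def φ : MvPolynomial (ℕ × ℕ) F →ₐ[F] MvPolynomial (ℕ ⊕ ℕ) F :=
  aeval (fun p : ℕ × ℕ =>
    if p.2 = 0 then (if p.1 = n + 1 then 0 else yv F p.1)
    else if p.1 = n + 1 then xv F p.2
    else xv F p.2 * xv F p.1 - yv F p.2 * yv F p.1)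

/-- The determinantal ideal generated by the `3×3` minors of `(z_{j,i})`, with
indices `i ∈ {0,1,...,n₁}`, `j ∈ {n₁+1,...,n,n+1}`. -/
noncomputable def R₃ : Ideal (MvPolynomial (ℕ × ℕ) F) :=
  Ideal.span { p | ∃ (jv iv : Fin 3 → ℕ),
    (∀ c, iv c ≤ n₁ ∧ n₁ + 1 ≤ jv c ∧ jv c ≤ n + 1) ∧
    p = Matrix.det (Matrix.of fun a b => Z F n (jv a) (iv b)) }

/-!
Each `φ(z_{j,i})` has the form `a_i b_j + c_i d_j`, so the image of the matrix `(z_{j,i})` has rank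
at most two and `φ` kills its `3 × 3` minors. Conversely, the diagonal term of a minor is congruent
modulo `R₃` to a signed sum of the other terms, which have smaller energy `∑ j * i` by the
rearrangement inequality. Hence the monomials with no increasing chain of three positions span
modulo `R₃`, and it remains to see that their images are linearly independent.

The positions of such a standard monomial split into two disjoint antidiagonal multisets `A` and
`B`. Expand the image into one term for each way to take the `x`-summand on some positions and the
`y`-summand on the others: a term determines the row and column indices of both parts, and among
all arrangements of these indices only the antidiagonal ones minimize the energy. So the term of
`(A, B)` occurs exactly once in the image of its monomial, and otherwise only in images of
monomials of larger energy. The images are therefore triangular with respect to the energy.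
-/

section Rearrangement

/-- The energy of a multiset of pairs is the sum of the products of their entries. It is the
weight that makes straightening terminate and orders the standard monomials. -/
def energy {R : Type*} [Semiring R] (M : Multiset (R × R)) : R :=
  (M.map fun p => p.1 * p.2).sum

section Semiring

variable {R : Type*} [Semiring R]

lemma energy_cons (p : R × R) (M : Multiset (R × R)) :
    energy (p ::ₘ M) = p.1 * p.2 + energy M := by
  rw [energy, Multiset.map_cons, Multiset.sum_cons, energy]

lemma energy_add (M N : Multiset (R × R)) : energy (M + N) = energy M + energy N := by
  rw [energy, Multiset.map_add, Multiset.sum_add, energy, energy]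

lemma energy_univ_map {ι : Type*} [Fintype ι] (p : ι → R × R) :
    energy (Finset.univ.val.map p) = ∑ t, (p t).1 * (p t).2 := by
  rw [energy, Multiset.map_map, Finset.sum_map_val]
  rfl

end Semiring

lemma exists_isGreatest_fst_isLeast_snd {α β : Type*} [LinearOrder α] [LinearOrder β]
    {M : Multiset (α × β)} (hM : AntivaryOn Prod.snd Prod.fst {p | p ∈ M}) (hM₀ : M ≠ 0) :
    ∃ p ∈ M, IsGreatest {a | a ∈ M.map Prod.fst} p.1 ∧ IsLeast {b | b ∈ M.map Prod.snd} p.2 := by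
  obtain ⟨p, hp, hmax⟩ :=
    Multiset.exists_max_image (fun p : α × β => toLex (p.1, OrderDual.toDual p.2)) hM₀
  have hcorner : ∀ q ∈ M, q.1 ≤ p.1 ∧ p.2 ≤ q.2 := fun q hq =>
    (Prod.Lex.toLex_le_toLex.1 (hmax q hq)).elim (fun h => ⟨h.le, hM hq hp h⟩)
      (fun h => ⟨h.1.le, h.2⟩)
  refine ⟨p, hp, ⟨Multiset.mem_map_of_mem _ hp, fun a ha => ?_⟩,
    ⟨Multiset.mem_map_of_mem _ hp, fun b hb => ?_⟩⟩
  · obtain ⟨q, hq, rfl⟩ := Multiset.mem_map.1 ha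
    exact (hcorner q hq).1
  · obtain ⟨q, hq, rfl⟩ := Multiset.mem_map.1 hb
    exact (hcorner q hq).2

variable {R : Type*} [Semiring R] [LinearOrder R] [IsStrictOrderedRing R] [ExistsAddOfLE R]

lemma exists_energy_cons_lt {p : R × R} {N : Multiset (R × R)} (hp : p ∉ N)
    (hfst : IsGreatest {a | a ∈ N.map Prod.fst} p.1)
    (hsnd : IsLeast {b | b ∈ N.map Prod.snd} p.2) :
    ∃ N', (p ::ₘ N').map Prod.fst = N.map Prod.fst ∧ (p ::ₘ N').map Prod.snd = N.map Prod.snd ∧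
      energy (p ::ₘ N') < energy N := by
  obtain ⟨i, j⟩ := p
  obtain ⟨⟨i₀, j'⟩, hu, hi₀⟩ := Multiset.mem_map.1 hfst.1
  obtain ⟨⟨i', j₀⟩, hv, hj₀⟩ := Multiset.mem_map.1 hsnd.1
  obtain rfl : i₀ = i := hi₀
  obtain rfl : j₀ = j := hj₀
  have hi : i' < i₀ :=
    (hfst.2 (Multiset.mem_map_of_mem _ hv)).lt_of_ne fun h : i' = i₀ => hp (h ▸ hv)
  have hj : j₀ < j' :=
    (hsnd.2 (Multiset.mem_map_of_mem _ hu)).lt_of_ne' fun h : j' = j₀ => hp (h ▸ hu)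
  obtain ⟨N, rfl⟩ := Multiset.exists_cons_of_mem hu
  obtain ⟨N, rfl⟩ := Multiset.exists_cons_of_mem
    ((Multiset.mem_cons.1 hv).resolve_left fun h => hi.ne (congrArg Prod.fst h))
  refine ⟨(i', j') ::ₘ N, by simp, by simp [Multiset.cons_swap j'], ?_⟩
  simp only [energy_cons, ← add_assoc, add_lt_add_iff_right]
  rw [add_comm, add_comm (i₀ * j')]
  exact mul_add_mul_lt_mul_add_mul hi hj

theorem energy_lt_of_antivaryOn {M N : Multiset (R × R)}
    (hM : AntivaryOn Prod.snd Prod.fst {p | p ∈ M}) (hfst : N.map Prod.fst = M.map Prod.fst)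
    (hsnd : N.map Prod.snd = M.map Prod.snd) (hne : N ≠ M) : energy M < energy N := by
  induction hk : M.card generalizing M N with
  | zero =>
    rw [Multiset.card_eq_zero] at hk
    subst hk
    exact absurd (Multiset.map_eq_zero.1 hfst) hne
  | succ k ih =>
    have hM₀ : M ≠ 0 := by
      rintro rfl
      simp at hk
    obtain ⟨p, hp, hgreatest, hleast⟩ := exists_isGreatest_fst_isLeast_snd hM hM₀
    obtain ⟨M', rfl⟩ := Multiset.exists_cons_of_mem hp
    have hM' : AntivaryOn Prod.snd Prod.fst {q | q ∈ M'} :=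
      hM.subset fun q hq => Multiset.mem_cons_of_mem hq
    have hk' : M'.card = k := by simpa using hk
    have energy_le : ∀ N', (p ::ₘ N').map Prod.fst = (p ::ₘ M').map Prod.fst →
        (p ::ₘ N').map Prod.snd = (p ::ₘ M').map Prod.snd → N' ≠ M' →
        energy (p ::ₘ M') < energy (p ::ₘ N') := by
      intro N' h₁ h₂ hne'
      simp only [Multiset.map_cons, Multiset.cons_inj_right] at h₁ h₂
      simpa only [energy_cons, add_lt_add_iff_left] using ih hM' h₁ h₂ hne' hk'
    by_cases hpN : p ∈ N
    · obtain ⟨N', rfl⟩ := Multiset.exists_cons_of_mem hpN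
      exact energy_le N' hfst hsnd fun h => hne (h ▸ rfl)
    · obtain ⟨N', h₁, h₂, hlt⟩ :=
        exists_energy_cons_lt hpN (hfst ▸ hgreatest) (hsnd ▸ hleast)
      rcases eq_or_ne N' M' with rfl | hne'
      · exact hlt
      · exact (energy_le N' (h₁.trans hfst) (h₂.trans hsnd) hne').trans hlt

lemma sum_comp_perm_mul_lt_sum_mul {ι : Type*} [Fintype ι] [LinearOrder ι] {f g : ι → R}
    (hf : StrictMono f) (hg : StrictMono g) {σ : Equiv.Perm ι} (hσ : σ ≠ 1) :
    ∑ t, f (σ t) * g t < ∑ t, f t * g t := by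
  rw [(hf.monotone.monovary hg.monotone).sum_comp_perm_mul_lt_sum_mul_iff]
  intro hmono
  have hσmono : StrictMono σ := fun s t hst =>
    (hf.le_iff_le.1 (hmono (hg hst))).lt_of_ne (σ.injective.ne hst.ne)
  refine hσ (Equiv.ext fun t => ?_)
  exact DFunLike.congr_fun
    (Subsingleton.elim (hσmono.orderIsoOfSurjective σ σ.surjective) (OrderIso.refl ι)) t

end Rearrangement

section Multisets

variable {α β : Type*}

lemma count_antidiagonal_zero_left_eq_one [DecidableEq α] (B : Multiset α) :
    B.antidiagonal.count (0, B) = 1 := by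
  induction B using Multiset.induction_on with
  | empty => simp
  | cons b B ih =>
    have hinj : Function.Injective (Prod.map (id : Multiset α → Multiset α) (Multiset.cons b)) :=
      Function.injective_id.prodMap fun _ _ => (Multiset.cons_inj_right b).1
    rw [Multiset.antidiagonal_cons, Multiset.count_add,
      show ((0 : Multiset α), b ::ₘ B) = Prod.map id (Multiset.cons b) (0, B) from rfl,
      Multiset.count_map_eq_count' _ _ hinj, ih, Multiset.count_eq_zero_of_notMem]
    simp

lemma count_antidiagonal_eq_one_of_disjoint [DecidableEq α] {A B : Multiset α}
    (hAB : Disjoint A B) : (A + B).antidiagonal.count (A, B) = 1 := by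
  induction A using Multiset.induction_on with
  | empty => rw [zero_add, count_antidiagonal_zero_left_eq_one]
  | cons a A ih =>
    obtain ⟨ha, hAB⟩ := Multiset.disjoint_cons_left.1 hAB
    have hinj : Function.Injective (Prod.map (Multiset.cons a) (id : Multiset α → Multiset α)) :=
      Function.Injective.prodMap (fun _ _ => (Multiset.cons_inj_right a).1) Function.injective_id
    rw [Multiset.cons_add, Multiset.antidiagonal_cons, Multiset.count_add,
      Multiset.count_eq_zero_of_notMem, zero_add,
      show (a ::ₘ A, B) = Prod.map (Multiset.cons a) id (A, B) from rfl,
      Multiset.count_map_eq_count' _ _ hinj, ih hAB]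
    intro h
    obtain ⟨s, -, hs⟩ := Multiset.mem_map.1 h
    have hB : a ::ₘ s.2 = B := congrArg Prod.snd hs
    exact ha (hB ▸ Multiset.mem_cons_self a s.2)

lemma eq_of_filter_ne_eq [DecidableEq α] {c : α} {s t : Multiset α} (hcard : s.card = t.card)
    (h : s.filter (· ≠ c) = t.filter (· ≠ c)) : s = t := by
  have hadd (u : Multiset α) : u.filter (· ≠ c) + Multiset.replicate (u.count c) c = u := by
    rw [add_comm, ← Multiset.filter_eq', Multiset.filter_add_not]
  have hcount : s.count c = t.count c := by
    rw [← hadd s, ← hadd t, h] at hcard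
    simpa using hcard
  rw [← hadd s, ← hadd t, h, hcount]

lemma eq_and_eq_of_add_filter_ne_eq [DecidableEq α] {P : α → Prop} {c : α}
    {s t s' t' : Multiset α} (hs : ∀ a ∈ s, P a) (ht : ∀ a ∈ t, ¬P a) (hs' : ∀ a ∈ s', P a)
    (ht' : ∀ a ∈ t', ¬P a) (hcard : s.card = t.card) (hcard' : s'.card = t'.card)
    (h : s + t.filter (· ≠ c) = s' + t'.filter (· ≠ c)) : s = s' ∧ t = t' := by
  classical
  have hfilter {u v : Multiset α} (hu : ∀ a ∈ u, P a) (hv : ∀ a ∈ v, ¬P a) :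
      (u + v.filter (· ≠ c)).filter P = u := by
    rw [Multiset.filter_add, Multiset.filter_eq_self.2 hu,
      Multiset.filter_eq_nil.2 fun a ha => hv a (Multiset.mem_of_mem_filter ha), add_zero]
  obtain rfl : s = s' := by rw [← hfilter hs ht, h, hfilter hs' ht']
  exact ⟨rfl, eq_of_filter_ne_eq (hcard ▸ hcard') (add_left_cancel h)⟩

lemma disjSum_inj {s s' : Multiset α} {t t' : Multiset β} :
    s.disjSum t = s'.disjSum t' ↔ s = s' ∧ t = t' := by
  classical
  refine ⟨fun h => ⟨?_, ?_⟩, fun h => h.1 ▸ h.2 ▸ rfl⟩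
  · ext a
    simpa [Multiset.disjSum, Multiset.count_map_eq_count' _ _ Sum.inl_injective] using
      congrArg (Multiset.count (Sum.inl a)) h
  · ext b
    simpa [Multiset.disjSum, Multiset.count_map_eq_count' _ _ Sum.inr_injective] using
      congrArg (Multiset.count (Sum.inr b)) h

lemma prod_map_ite_one {A : Type*} [CommMonoid A] [DecidableEq α] (c : α) (f : α → A)
    (s : Multiset α) :
    (s.map fun a => if a = c then 1 else f a).prod = ((s.filter (· ≠ c)).map f).prod := by
  induction s using Multiset.induction_on with
  | empty => simp
  | cons a s ih => by_cases h : a = c <;> simp [h, ih]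

lemma prod_map_ite_zero_of_notMem {A : Type*} [CommMonoidWithZero A] [DecidableEq α] {c : α}
    {f : α → A} {s : Multiset α} (hc : c ∉ s) :
    (s.map fun a => if a = c then 0 else f a).prod = (s.map f).prod :=
  congrArg Multiset.prod (Multiset.map_congr rfl fun a ha => if_neg fun h : a = c => hc (h ▸ ha))

lemma prod_map_X_eq_monomial {R : Type*} [CommSemiring R] [DecidableEq α] (s : Multiset α) :
    (s.map (X : α → MvPolynomial α R)).prod = monomial (Multiset.toFinsupp s) 1 := by
  induction s using Multiset.induction_on with
  | empty => simp
  | cons a s ih =>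
    rw [Multiset.map_cons, Multiset.prod_cons, ih, ← Multiset.singleton_add, map_add,
      Multiset.toFinsupp_singleton, X, monomial_mul, one_mul]

end Multisets

theorem linearIndepOn_of_triangular {R V ι W : Type*} [Ring R] [NoZeroDivisors R]
    [AddCommGroup V] [Module R V] [LinearOrder W] {v : ι → V} {S : Set ι} (w : ι → W)
    (h : ∀ i ∈ S, ∃ c : V →ₗ[R] R, c (v i) ≠ 0 ∧ ∀ j ∈ S, j ≠ i → c (v j) ≠ 0 → w i < w j) :
    LinearIndepOn R v S := by
  rw [linearIndepOn_iff]
  intro l hl hzero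
  by_contra hne
  obtain ⟨i, hi, hmax⟩ := l.support.exists_max_image w (Finsupp.support_nonempty_iff.2 hne)
  obtain ⟨c, hc, hlt⟩ := h i (hl hi)
  have hsum : c (Finsupp.linearCombination R v l) = l i * c (v i) := by
    rw [Finsupp.linearCombination_apply, Finsupp.sum, map_sum]
    simp only [map_smul, smul_eq_mul]
    refine Finset.sum_eq_single_of_mem i hi fun j hj hji => ?_
    by_contra hcj
    exact (hlt j (hl hj) hji (right_ne_zero_of_mul hcj)).not_ge (hmax j hj)
  rw [hzero, map_zero] at hsum
  exact mul_ne_zero (Finsupp.mem_support_iff.1 hi) hc hsum.symm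

section Straightening

variable (K : Type*) [Field K] {n₁ n : ℕ}

/-- The positions `(j, i)` of the entries `z_{j,i}` of the matrix. -/
def indexBox (n₁ n : ℕ) : Set (ℕ × ℕ) := Set.Icc (n₁ + 1) (n + 1) ×ˢ Set.Iic n₁

/-- The monomial `∏ z_{j,i}` over a multiset of positions `(j, i)`; it is zero if the multiset
contains the position `(n + 1, 0)`. -/
noncomputable def zMonomial (n : ℕ) (M : Multiset (ℕ × ℕ)) : MvPolynomial (ℕ × ℕ) K :=
  (M.map fun p => Z K n p.1 p.2).prod

/-- A multiset of positions is standard if its monomial is nonzero and not divisible by the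
diagonal term of a `3 × 3` minor. -/
structure IsStandard (n₁ n : ℕ) (M : Multiset (ℕ × ℕ)) : Prop where
  mem_indexBox : ∀ p ∈ M, p ∈ indexBox n₁ n
  corner_notMem : (n + 1, 0) ∉ M
  no_chain : ¬∃ p : Fin 3 → ℕ × ℕ,
    StrictMono (Prod.fst ∘ p) ∧ StrictMono (Prod.snd ∘ p) ∧ ∀ t, p t ∈ M

lemma zMonomial_add (M N : Multiset (ℕ × ℕ)) :
    zMonomial K n (M + N) = zMonomial K n M * zMonomial K n N := by
  rw [zMonomial, Multiset.map_add, Multiset.prod_add, zMonomial, zMonomial]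

lemma zMonomial_univ_map {ι : Type*} [Fintype ι] (p : ι → ℕ × ℕ) :
    zMonomial K n (Finset.univ.val.map p) = ∏ t, Z K n (p t).1 (p t).2 := by
  rw [zMonomial, Multiset.map_map, Finset.prod_map_val]
  rfl

lemma zMonomial_eq_zero {M : Multiset (ℕ × ℕ)} (hM : (n + 1, 0) ∈ M) : zMonomial K n M = 0 :=
  Multiset.prod_eq_zero (Multiset.mem_map.2 ⟨_, hM, if_pos ⟨rfl, rfl⟩⟩)

variable {K}

lemma zMonomial_mem_of_permuted_mem {W : Submodule K (MvPolynomial (ℕ × ℕ) K)}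
    (hW : (R₃ K n₁ n).restrictScalars K ≤ W) {p : Fin 3 → ℕ × ℕ} (hp : ∀ t, p t ∈ indexBox n₁ n)
    (M : Multiset (ℕ × ℕ))
    (hperm : ∀ σ : Equiv.Perm (Fin 3), σ ≠ 1 →
      zMonomial K n (Finset.univ.val.map (fun t => ((p (σ t)).1, (p t).2)) + M) ∈ W) :
    zMonomial K n (Finset.univ.val.map p + M) ∈ W := by
  set term : Equiv.Perm (Fin 3) → MvPolynomial (ℕ × ℕ) K := fun σ =>
    zMonomial K n (Finset.univ.val.map (fun t => ((p (σ t)).1, (p t).2)) + M) with hterm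
  have hdet : (Matrix.of fun a b => Z K n (p a).1 (p b).2).det ∈ R₃ K n₁ n :=
    Ideal.subset_span ⟨fun t => (p t).1, fun t => (p t).2,
      fun t => ⟨(hp t).2, (hp t).1⟩, rfl⟩
  have hexpand : (Matrix.of fun a b => Z K n (p a).1 (p b).2).det * zMonomial K n M =
      ∑ σ : Equiv.Perm (Fin 3), Equiv.Perm.sign σ • term σ := by
    simp only [hterm, Matrix.det_apply, Finset.sum_mul, zMonomial_add, zMonomial_univ_map,
      smul_mul_assoc, Matrix.of_apply]
  have hsum : ∑ σ : Equiv.Perm (Fin 3), Equiv.Perm.sign σ • term σ ∈ W :=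
    hexpand ▸ hW (Ideal.mul_mem_right _ _ hdet)
  rw [← Finset.add_sum_erase _ _ (Finset.mem_univ 1), Submodule.add_mem_iff_left] at hsum
  · simpa [hterm] using hsum
  · refine Submodule.sum_mem _ fun σ hσ => ?_
    rw [Units.smul_def]
    exact zsmul_mem (hperm σ (Finset.ne_of_mem_erase hσ)) _

theorem zMonomial_mem_sup_span_standard {M : Multiset (ℕ × ℕ)}
    (hM : ∀ p ∈ M, p ∈ indexBox n₁ n) :
    zMonomial K n M ∈ (R₃ K n₁ n).restrictScalars K ⊔
      Submodule.span K (zMonomial K n '' {N | IsStandard n₁ n N}) := by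
  induction hE : energy M using Nat.strong_induction_on generalizing M with
  | _ e ih =>
  by_cases hcorner : (n + 1, 0) ∈ M
  · rw [zMonomial_eq_zero K hcorner]
    exact Submodule.zero_mem _
  by_cases hchain : ∃ p : Fin 3 → ℕ × ℕ,
      StrictMono (Prod.fst ∘ p) ∧ StrictMono (Prod.snd ∘ p) ∧ ∀ t, p t ∈ M
  · obtain ⟨p, hfst, hsnd, hpM⟩ := hchain
    have hle : Finset.univ.val.map p ≤ M := by
      have hnodup := Finset.univ.nodup.map hfst.injective.of_comp
      refine (Multiset.le_iff_subset hnodup).2 fun q hq => ?_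
      obtain ⟨t, -, rfl⟩ := Multiset.mem_map.1 hq
      exact hpM t
    obtain ⟨M', rfl⟩ := Multiset.le_iff_exists_add.1 hle
    refine zMonomial_mem_of_permuted_mem le_sup_left (fun t => hM _ (hpM t)) M' fun σ hσ =>
      ih _ ?_ ?_ rfl
    · rw [← hE, energy_add, energy_add, add_lt_add_iff_right]
      simpa only [energy_univ_map, Function.comp_apply] using
        sum_comp_perm_mul_lt_sum_mul hfst hsnd hσ
    · intro q hq
      rcases Multiset.mem_add.1 hq with hq | hq
      · obtain ⟨t, -, rfl⟩ := Multiset.mem_map.1 hq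
        exact ⟨(hM _ (hpM (σ t))).1, (hM _ (hpM t)).2⟩
      · exact hM q (Multiset.mem_add.2 (Or.inr hq))
  · exact Submodule.mem_sup_right (Submodule.subset_span ⟨M, ⟨hM, hcorner, hchain⟩, rfl⟩)

lemma exists_zMonomial_eq_of_mem_closure {g : MvPolynomial (ℕ × ℕ) K}
    (hg : g ∈ Submonoid.closure ((fun p => Z K n p.1 p.2) '' indexBox n₁ n)) :
    ∃ M : Multiset (ℕ × ℕ), (∀ p ∈ M, p ∈ indexBox n₁ n) ∧ zMonomial K n M = g := by
  induction hg using Submonoid.closure_induction with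
  | mem _ h =>
    obtain ⟨p, hp, rfl⟩ := h
    exact ⟨{p}, fun q hq => Multiset.mem_singleton.1 hq ▸ hp, Multiset.prod_singleton _⟩
  | one => exact ⟨0, fun _ h => absurd h (Multiset.notMem_zero _), Multiset.prod_zero⟩
  | mul _ _ _ _ ihM ihN =>
    obtain ⟨M, hM, rfl⟩ := ihM
    obtain ⟨N, hN, rfl⟩ := ihN
    exact ⟨M + N, fun p hp => (Multiset.mem_add.1 hp).elim (hM p) (hN p), zMonomial_add K M N⟩

theorem adjoin_le_sup_span_standard :
    Subalgebra.toSubmodule (Algebra.adjoin K ((fun p => Z K n p.1 p.2) '' indexBox n₁ n)) ≤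
      (R₃ K n₁ n).restrictScalars K ⊔
        Submodule.span K (zMonomial K n '' {N | IsStandard n₁ n N}) := by
  rw [Algebra.adjoin_eq_span, Submodule.span_le]
  intro g hg
  obtain ⟨M, hM, rfl⟩ := exists_zMonomial_eq_of_mem_closure hg
  exact zMonomial_mem_sup_span_standard hM

end Straightening

section Splittings

variable {n₁ n : ℕ}

theorem IsStandard.exists_antivaryOn_add_antivaryOn {M : Multiset (ℕ × ℕ)}
    (hM : IsStandard n₁ n M) :
    ∃ A B, A + B = M ∧ Disjoint A B ∧ AntivaryOn Prod.snd Prod.fst {p | p ∈ A} ∧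
      AntivaryOn Prod.snd Prod.fst {p | p ∈ B} ∧ 0 ∉ A.map Prod.snd ∧ n + 1 ∉ B.map Prod.fst := by
  classical
  -- The `x`-summand of `φ(z_{j,0})` and the `y`-summand of `φ(z_{n+1,i})` vanish, so positions with
  -- `j = n + 1` have to go to `A` and those with `i = 0` to `B`.
  set P : ℕ × ℕ → Prop := fun p => p.1 = n + 1 ∨ ∃ q ∈ M, q.1 < p.1 ∧ q.2 < p.2
  refine ⟨M.filter P, M.filter (¬P ·), Multiset.filter_add_not P M, ?_, ?_, ?_, ?_, ?_⟩
  · exact Multiset.disjoint_left.2 fun hA hB =>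
      Multiset.of_mem_filter hB (Multiset.of_mem_filter hA)
  · intro q hq r hr hlt
    by_contra! hlt'
    obtain ⟨hqM, hq | ⟨p, hpM, hpq, hpq'⟩⟩ := Multiset.mem_filter.1 hq
    · exact (hM.mem_indexBox r (Multiset.mem_of_mem_filter hr)).1.2.not_gt (hq ▸ hlt)
    · refine hM.no_chain ⟨![p, q, r], ?_, ?_, ?_⟩
      · simp [Fin.strictMono_iff_lt_succ, Fin.forall_fin_succ, hpq, hlt]
      · simp [Fin.strictMono_iff_lt_succ, Fin.forall_fin_succ, hpq', hlt']
      · simpa [Fin.forall_fin_succ] using ⟨hpM, hqM, Multiset.mem_of_mem_filter hr⟩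
  · intro q hq r hr hlt
    by_contra! hlt'
    exact Multiset.of_mem_filter hr (Or.inr ⟨q, Multiset.mem_of_mem_filter hq, hlt, hlt'⟩)
  · intro h
    obtain ⟨⟨j, i⟩, hp, rfl : i = 0⟩ := Multiset.mem_map.1 h
    obtain ⟨hpM, rfl | ⟨q, -, -, hq⟩⟩ := Multiset.mem_filter.1 hp
    · exact hM.corner_notMem hpM
    · exact Nat.not_lt_zero _ hq
  · intro h
    obtain ⟨p, hp, hpn⟩ := Multiset.mem_map.1 h
    exact Multiset.of_mem_filter hp (Or.inl hpn)

end Splittings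

section LeadingTerms

variable (K : Type*) [Field K]

/-- The `x`-factor of `φ(z_{j,i})` contributed by the lower index `i`. The four factors `lowX`,
`upX`, `lowY`, `upY` write every `φ(z_{j,i})` as `lowX i * upX j + lowY i * upY j`; their special
values at `i = 0` and `j = n + 1` encode the boundary cases `y_j`, `x_i` and `0`. -/
noncomputable def lowX (i : ℕ) : MvPolynomial (ℕ ⊕ ℕ) K := if i = 0 then 0 else xv K i

/-- The `x`-factor of `φ(z_{j,i})` contributed by the upper index `j`. -/
noncomputable def upX (n j : ℕ) : MvPolynomial (ℕ ⊕ ℕ) K := if j = n + 1 then 1 else xv K j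

/-- The `y`-factor of `φ(z_{j,i})` contributed by the lower index `i`; it carries the sign. -/
noncomputable def lowY (i : ℕ) : MvPolynomial (ℕ ⊕ ℕ) K := if i = 0 then 1 else -yv K i

/-- The `y`-factor of `φ(z_{j,i})` contributed by the upper index `j`. -/
noncomputable def upY (n j : ℕ) : MvPolynomial (ℕ ⊕ ℕ) K := if j = n + 1 then 0 else yv K j

/-- The term of the expansion of `φ (zMonomial K n (s.1 + s.2))` that takes the `x`-summand at the
positions in `s.1` and the `y`-summand at those in `s.2`. -/
noncomputable def splitTerm (n : ℕ) (s : Multiset (ℕ × ℕ) × Multiset (ℕ × ℕ)) :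
    MvPolynomial (ℕ ⊕ ℕ) K :=
  (s.1.map fun p => lowX K p.2 * upX K n p.1).prod *
    (s.2.map fun p => lowY K p.2 * upY K n p.1).prod

/-- A splitting `s` is live if no factor of `splitTerm K n s` is zero. -/
structure IsLive (n : ℕ) (s : Multiset (ℕ × ℕ) × Multiset (ℕ × ℕ)) : Prop where
  zero_notMem : 0 ∉ s.1.map Prod.snd
  succ_notMem : n + 1 ∉ s.2.map Prod.fst

/-- The exponent of the monomial `splitTerm K n s` of a live splitting `s`, as the multiset of its
variables. The indices `n + 1` and `0` are dropped since their factors are `1`. -/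
def splitExponent (n : ℕ) (s : Multiset (ℕ × ℕ) × Multiset (ℕ × ℕ)) : Multiset (ℕ ⊕ ℕ) :=
  (s.1.map Prod.snd + (s.1.map Prod.fst).filter (· ≠ n + 1)).disjSum
    (s.2.map Prod.fst + (s.2.map Prod.snd).filter (· ≠ 0))

variable {n₁ n : ℕ}

lemma φ_Z (j i : ℕ) : φ K n (Z K n j i) = lowX K i * upX K n j + lowY K i * upY K n j := by
  unfold Z φ lowX upX lowY upY
  split_ifs <;> simp_all [sub_eq_add_neg]

theorem R₃_le_ker_φ : R₃ K n₁ n ≤ RingHom.ker (φ K n) := by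
  rw [R₃, Ideal.span_le]
  rintro _ ⟨jv, iv, -, rfl⟩
  simp only [SetLike.mem_coe, RingHom.mem_ker, Matrix.det_fin_three, Matrix.of_apply,
    map_add, map_sub, map_mul, φ_Z]
  ring

lemma φ_zMonomial (M : Multiset (ℕ × ℕ)) :
    φ K n (zMonomial K n M) = (M.antidiagonal.map (splitTerm K n)).sum := by
  rw [zMonomial, map_multiset_prod, Multiset.map_map]
  simp only [Function.comp_def, φ_Z, Multiset.prod_map_add]
  rfl

variable {K}

lemma splitTerm_eq_zero {s : Multiset (ℕ × ℕ) × Multiset (ℕ × ℕ)} (hs : ¬IsLive n s) :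
    splitTerm K n s = 0 := by
  by_cases h : 0 ∈ s.1.map Prod.snd
  · obtain ⟨p, hp, hp₀⟩ := Multiset.mem_map.1 h
    rw [splitTerm, Multiset.prod_eq_zero (Multiset.mem_map.2 ⟨p, hp, by simp [lowX, hp₀]⟩),
      zero_mul]
  · have h' : n + 1 ∈ s.2.map Prod.fst := by
      by_contra h'
      exact hs ⟨h, h'⟩
    obtain ⟨p, hp, hpn⟩ := Multiset.mem_map.1 h'
    rw [splitTerm, Multiset.prod_eq_zero (s := s.2.map _)
      (Multiset.mem_map.2 ⟨p, hp, by simp [upY, hpn]⟩), mul_zero]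

lemma IsLive.splitTerm_eq {s : Multiset (ℕ × ℕ) × Multiset (ℕ × ℕ)} (hs : IsLive n s) :
    splitTerm K n s = monomial (Multiset.toFinsupp (splitExponent n s))
      ((-1) ^ ((s.2.map Prod.snd).filter (· ≠ 0)).card) := by
  have hlowX : (s.1.map fun p => lowX K p.2).prod = ((s.1.map Prod.snd).map (xv K)).prod := by
    rw [← prod_map_ite_zero_of_notMem hs.zero_notMem, Multiset.map_map]
    rfl
  have hupX : (s.1.map fun p => upX K n p.1).prod =
      (((s.1.map Prod.fst).filter (· ≠ n + 1)).map (xv K)).prod := by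
    rw [← prod_map_ite_one, Multiset.map_map]
    rfl
  have hupY : (s.2.map fun p => upY K n p.1).prod = ((s.2.map Prod.fst).map (yv K)).prod := by
    rw [← prod_map_ite_zero_of_notMem hs.succ_notMem, Multiset.map_map]
    rfl
  have hlowY : (s.2.map fun p => lowY K p.2).prod =
      (-1) ^ ((s.2.map Prod.snd).filter (· ≠ 0)).card *
        (((s.2.map Prod.snd).filter (· ≠ 0)).map (yv K)).prod := by
    rw [← Multiset.card_map (yv K), ← Multiset.prod_map_neg, Multiset.map_map,
      ← prod_map_ite_one, Multiset.map_map]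
    rfl
  have hX : (((splitExponent n s).map X).prod : MvPolynomial (ℕ ⊕ ℕ) K) =
      ((s.1.map Prod.snd + (s.1.map Prod.fst).filter (· ≠ n + 1)).map (xv K)).prod *
        ((s.2.map Prod.fst + (s.2.map Prod.snd).filter (· ≠ 0)).map (yv K)).prod := by
    rw [splitExponent, Multiset.map_disjSum, Multiset.prod_add]
    rfl
  rw [← mul_one ((-1) ^ _), ← C_mul_monomial, ← prod_map_X_eq_monomial, hX, splitTerm,
    Multiset.prod_map_mul, Multiset.prod_map_mul, hlowX, hupX, hupY, hlowY, Multiset.map_add,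
    Multiset.map_add, Multiset.prod_add, Multiset.prod_add, map_pow, map_neg, map_one]
  ring

lemma coeff_splitTerm_ne_zero_iff {s : Multiset (ℕ × ℕ) × Multiset (ℕ × ℕ)}
    {d : Multiset (ℕ ⊕ ℕ)} :
    coeff (Multiset.toFinsupp d) (splitTerm K n s) ≠ 0 ↔ IsLive n s ∧ splitExponent n s = d := by
  by_cases hs : IsLive n s
  · rw [hs.splitTerm_eq, coeff_monomial]
    simp [hs]
  · simp [splitTerm_eq_zero hs, hs]

lemma coeff_φ_zMonomial (d : ℕ ⊕ ℕ →₀ ℕ) (M : Multiset (ℕ × ℕ)) :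
    coeff d (φ K n (zMonomial K n M)) =
      (M.antidiagonal.map fun s => coeff d (splitTerm K n s)).sum := by
  rw [φ_zMonomial, ← lcoeff_apply (R := K), map_multiset_sum, Multiset.map_map]
  rfl

-- In each of the two sorts of variables row and column indices are told apart by comparison with
-- `n₁`, and the number of dropped indices `n + 1` or `0` is recovered from the cardinalities.
lemma marginals_eq_of_splitExponent_eq {s s' : Multiset (ℕ × ℕ) × Multiset (ℕ × ℕ)}
    (hs : ∀ p ∈ s.1 + s.2, p ∈ indexBox n₁ n) (hs' : ∀ p ∈ s'.1 + s'.2, p ∈ indexBox n₁ n)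
    (h : splitExponent n s = splitExponent n s') :
    (s.1.map Prod.snd = s'.1.map Prod.snd ∧ s.1.map Prod.fst = s'.1.map Prod.fst) ∧
      s.2.map Prod.fst = s'.2.map Prod.fst ∧ s.2.map Prod.snd = s'.2.map Prod.snd := by
  have hfst {A : Multiset (ℕ × ℕ)} (hA : ∀ p ∈ A, p ∈ indexBox n₁ n) :
      ∀ j ∈ A.map Prod.fst, n₁ < j := by
    simp only [Multiset.mem_map]
    rintro _ ⟨p, hp, rfl⟩
    exact (hA p hp).1.1
  have hsnd {A : Multiset (ℕ × ℕ)} (hA : ∀ p ∈ A, p ∈ indexBox n₁ n) :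
      ∀ i ∈ A.map Prod.snd, ¬n₁ < i := by
    simp only [Multiset.mem_map]
    rintro _ ⟨p, hp, rfl⟩
    exact not_lt.2 (hA p hp).2
  simp only [Multiset.mem_add, or_imp, forall_and] at hs hs'
  obtain ⟨hX, hY⟩ := disjSum_inj.1 h
  refine ⟨eq_and_eq_of_add_filter_ne_eq (P := fun i => ¬n₁ < i) (hsnd hs.1) ?_ (hsnd hs'.1) ?_
    (by simp) (by simp) hX, eq_and_eq_of_add_filter_ne_eq (hfst hs.2) (hsnd hs.2) (hfst hs'.2)
    (hsnd hs'.2) (by simp) (by simp) hY⟩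
  · simpa only [not_not] using hfst hs.1
  · simpa only [not_not] using hfst hs'.1

lemma energy_lt_of_splitExponent_eq {s s' : Multiset (ℕ × ℕ) × Multiset (ℕ × ℕ)}
    (hs : ∀ p ∈ s.1 + s.2, p ∈ indexBox n₁ n) (hs' : ∀ p ∈ s'.1 + s'.2, p ∈ indexBox n₁ n)
    (h₁ : AntivaryOn Prod.snd Prod.fst {p | p ∈ s.1})
    (h₂ : AntivaryOn Prod.snd Prod.fst {p | p ∈ s.2})
    (h : splitExponent n s' = splitExponent n s) (hne : s' ≠ s) :
    energy (s.1 + s.2) < energy (s'.1 + s'.2) := by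
  obtain ⟨⟨hsnd₁, hfst₁⟩, hfst₂, hsnd₂⟩ := marginals_eq_of_splitExponent_eq hs' hs h
  rw [energy_add, energy_add]
  rcases eq_or_ne s'.1 s.1 with heq₁ | hne₁
  · rw [heq₁, add_lt_add_iff_left]
    exact energy_lt_of_antivaryOn h₂ hfst₂ hsnd₂ fun heq₂ => hne (Prod.ext heq₁ heq₂)
  · refine add_lt_add_of_lt_of_le (energy_lt_of_antivaryOn h₁ hfst₁ hsnd₁ hne₁) ?_
    rcases eq_or_ne s'.2 s.2 with heq₂ | hne₂
    · rw [heq₂]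
    · exact (energy_lt_of_antivaryOn h₂ hfst₂ hsnd₂ hne₂).le

variable (K)

theorem IsStandard.exists_coeff_triangular {M : Multiset (ℕ × ℕ)} (hM : IsStandard n₁ n M) :
    ∃ d, coeff d (φ K n (zMonomial K n M)) ≠ 0 ∧
      ∀ N : Multiset (ℕ × ℕ), (∀ p ∈ N, p ∈ indexBox n₁ n) → N ≠ M →
        coeff d (φ K n (zMonomial K n N)) ≠ 0 → energy M < energy N := by
  obtain ⟨A, B, rfl, hAB, hA, hB, h₀, hn⟩ := hM.exists_antivaryOn_add_antivaryOn
  have energy_lt {s} (hs : ∀ p ∈ s.1 + s.2, p ∈ indexBox n₁ n) (hne : s ≠ (A, B))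
      (hcoeff : coeff (Multiset.toFinsupp (splitExponent n (A, B))) (splitTerm K n s) ≠ 0) :
      energy (A + B) < energy (s.1 + s.2) :=
    energy_lt_of_splitExponent_eq hM.mem_indexBox hs hA hB (coeff_splitTerm_ne_zero_iff.1 hcoeff).2
      hne
  refine ⟨Multiset.toFinsupp (splitExponent n (A, B)), ?_, fun N hN hne hcoeff => ?_⟩
  · classical
    rw [coeff_φ_zMonomial, Multiset.sum_map_eq_nsmul_single (A, B),
      count_antidiagonal_eq_one_of_disjoint hAB, one_smul]
    · exact coeff_splitTerm_ne_zero_iff.2 ⟨⟨h₀, hn⟩, rfl⟩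
    · intro s hne hs
      rw [Multiset.mem_antidiagonal] at hs
      by_contra hcoeff
      exact (energy_lt (hs ▸ hM.mem_indexBox) hne hcoeff).ne (congrArg energy hs.symm)
  · rw [coeff_φ_zMonomial] at hcoeff
    obtain ⟨s, hs, hsne⟩ : ∃ s ∈ N.antidiagonal,
        coeff (Multiset.toFinsupp (splitExponent n (A, B))) (splitTerm K n s) ≠ 0 := by
      by_contra! hzero
      refine hcoeff (Multiset.sum_eq_zero fun x hx => ?_)
      obtain ⟨s, hs, rfl⟩ := Multiset.mem_map.1 hx
      exact hzero s hs
    obtain rfl := Multiset.mem_antidiagonal.1 hs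
    exact energy_lt hN (fun h => hne (h ▸ rfl)) hsne

theorem linearIndepOn_φ_zMonomial :
    LinearIndepOn K (fun M => φ K n (zMonomial K n M)) {M | IsStandard n₁ n M} :=
  linearIndepOn_of_triangular energy fun _ hM =>
    let ⟨d, hd, hlt⟩ := hM.exists_coeff_triangular K
    ⟨lcoeff K d, hd, fun N hN => hlt N hN.mem_indexBox⟩

end LeadingTerms

theorem sum_in_kernel_mem_three_minors_general {K : Type*} [Field K] {n₁ n : ℕ}
    {f : MvPolynomial (ℕ × ℕ) K}
    (hf : f ∈ Algebra.adjoin K ((fun p => Z K n p.1 p.2) '' indexBox n₁ n)) :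
    f ∈ R₃ K n₁ n ↔ φ K n f = 0 := by
  refine ⟨fun h => R₃_le_ker_φ K h, fun hker => ?_⟩
  obtain ⟨r, hr, g, hg, rfl⟩ := Submodule.mem_sup.1 (adjoin_le_sup_span_standard hf)
  obtain ⟨l, hl, rfl⟩ := (Finsupp.mem_span_image_iff_linearCombination K).1 hg
  have hφr : φ K n r = 0 := R₃_le_ker_φ K hr
  rw [map_add, hφr, zero_add, ← AlgHom.toLinearMap_apply, Finsupp.apply_linearCombination] at hker
  obtain rfl : l = 0 := linearIndepOn_iff.1 (linearIndepOn_φ_zMonomial K) l hl hker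
  simpa only [map_zero, add_zero, Submodule.restrictScalars_mem] using hr

/-- graded Lemma 3.3: if `f = Σ_s a_s f_s` is a combination of
degree-`k` monomials in the `z_{j,i}` all having the same multiset `I₁` of lower
indices and the same multiset `I₃` of upper indices, and `φ(f) = 0`, then `f` lies
in the ideal of `3×3` minors. -/
theorem sum_in_kernel_mem_three_minors
    (hn : n₁ < n) (m k : ℕ) (a : Fin m → F)
    (jf : Fin m → Fin k → ℕ) (iv : Fin m → Fin k → ℕ)
    (I₁ I₃ : Multiset ℕ)
    (hrange : ∀ s t, iv s t ≤ n₁ ∧ n₁ + 1 ≤ jf s t ∧ jf s t ≤ n + 1)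
    (hI₁ : ∀ s, (List.ofFn (iv s) : Multiset ℕ) = I₁)
    (hI₃ : ∀ s, (List.ofFn (jf s) : Multiset ℕ) = I₃)
    (f : MvPolynomial (ℕ × ℕ) F)
    (hf : f = ∑ s, C (a s) * ∏ t, Z F n (jf s t) (iv s t))
    (hker : φ F n f = 0) :
    f ∈ R₃ F n₁ n := by
  refine (sum_in_kernel_mem_three_minors_general ?_).2 hker
  rw [hf]
  refine Subalgebra.sum_mem _ fun s _ => ?_
  rw [← smul_eq_C_mul]
  refine Subalgebra.smul_mem _ (Subalgebra.prod_mem _ fun t _ => ?_) _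
  exact Algebra.subset_adjoin ⟨(jf s t, iv s t), ⟨(hrange s t).2, (hrange s t).1⟩, rfl⟩

end Stmt14
end
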